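/- arXiv:0806.0043 — 2 statements merged into one kernel-verified Lean document; each statement's English description precedes it below -/
import Mathlib

section
/- For every s ≥ 0 and every factor v of w that has a kernel period q with q ≤ 1966·3^s, one has |v|/q < 35/34 + (3/1966)·∑_{j=0}^{s-1} 3^{-j}. -/
/-- The four-letter alphabet `A₄ = {1,2,3,4}`; the value `k : Fin 4` represents letter `k+1`. -/
abbrev A4 := Fin 4

/-- The morphism `f` on letters: `f(1)=121, f(2)=123, f(3)=141, f(4)=142`
(letters `1,2,3,4` encoded as `0,1,2,3`). -/
def fm : A4 → List A4
  | 0 => [0, 1, 0]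
  | 1 => [0, 1, 2]
  | 2 => [0, 3, 0]
  | 3 => [0, 3, 1]

/-- The morphism `f` extended to words by concatenation. -/
def fw (u : List A4) : List A4 := u.flatMap fm

/-- The fixed point `w` of `f` starting with the letter `1`: since `|f^k(1)| = 3^k` and each
`f^k(1)` is a prefix of `f^(k+1)(1)`, the `n`-th letter of `w` is the `n`-th letter of
`f^(n+1)(1)`. -/
def w (n : ℕ) : A4 := ((fw^[n + 1]) [0]).getD n 0

/-- The finite word `t` occurs at position `i` in the infinite word `x`. -/
def OccursAt {α : Type*} (t : List α) (x : ℕ → α) (i : ℕ) : Prop :=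
  t = (List.range t.length).map fun k => x (i + k)

/-- The finite word `v` is a factor of the infinite word `x`. -/
def FactorOf {α : Type*} (v : List α) (x : ℕ → α) : Prop :=
  ∃ i, OccursAt v x i

/-- The finite word `v` has period `q ≥ 1`: `v(j) = v(j+q)` whenever `0 ≤ j < |v| - q`. -/
def HasPeriod {α : Type*} (v : List α) (q : ℕ) : Prop :=
  1 ≤ q ∧ ∀ j, j + q < v.length → v[j]? = v[j + q]?

/-- A word lies in `ker ψ` if each letter of `A₄` occurs in it a number of times
divisible by `4`. -/
def InKerPsi (u : List A4) : Prop := ∀ a : A4, 4 ∣ u.count a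

/-- `q` is a kernel period of `v`: `1 ≤ q ≤ |v|`, `v` has period `q`, and the prefix of `v`
of length `q` lies in `ker ψ`. -/
def KernelPeriod (v : List A4) (q : ℕ) : Prop :=
  q ≤ v.length ∧ HasPeriod v q ∧ InKerPsi (v.take q)

/-! ### Letters of `w` -/

def g1 : A4 → A4
  | 0 => 1
  | 1 => 1
  | 2 => 3
  | 3 => 3

def g2 : A4 → A4
  | 0 => 0
  | 1 => 2
  | 2 => 0
  | 3 => 1

theorem fm_eq (x : A4) : fm x = [0, g1 x, g2 x] := by
  revert x; decide

theorem fw_cons (x : A4) (u : List A4) : fw (x :: u) = 0 :: g1 x :: g2 x :: fw u := by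
  simp [fw, fm_eq]

theorem fw_append (u v : List A4) : fw (u ++ v) = fw u ++ fw v := by
  simp [fw]

theorem fw_length (u : List A4) : (fw u).length = 3 * u.length := by
  induction u with
  | nil => rfl
  | cons x u ih => rw [fw_cons]; simp [ih]; ring

theorem fw_get (u : List A4) (n : ℕ) (hn : n < u.length) :
    (fw u).getD (3 * n) 0 = 0 ∧ (fw u).getD (3 * n + 1) 0 = g1 (u.getD n 0) ∧
      (fw u).getD (3 * n + 2) 0 = g2 (u.getD n 0) := by
  induction u generalizing n with
  | nil => simp at hn
  | cons x u ih =>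
    rw [fw_cons]
    cases n with
    | zero => simp
    | succ n =>
      have := ih n (by simpa using hn)
      simpa [Nat.mul_add, Nat.add_right_comm] using this

theorem W_length (k : ℕ) : (fw^[k] [0]).length = 3 ^ k := by
  induction k with
  | zero => rfl
  | succ k ih => rw [Function.iterate_succ_apply', fw_length, ih]; ring

theorem W_prefix (k : ℕ) : ∃ t, fw^[k + 1] [0] = fw^[k] [0] ++ t := by
  induction k with
  | zero => exact ⟨[1, 0], by decide⟩
  | succ k ih =>
    obtain ⟨t, ht⟩ := ih
    refine ⟨fw t, ?_⟩
    rw [Function.iterate_succ_apply', ht, fw_append, ← Function.iterate_succ_apply' fw k, ht]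

theorem W_stable (k d n : ℕ) (hn : n < 3 ^ k) :
    (fw^[k + d] [0]).getD n 0 = (fw^[k] [0]).getD n 0 := by
  induction d with
  | zero => rfl
  | succ d ih =>
    obtain ⟨t, ht⟩ := W_prefix (k + d)
    rw [← Nat.add_assoc, ht, ← ih, List.getD_append]
    rw [W_length, pow_add]
    exact lt_of_lt_of_le hn (Nat.le_mul_of_pos_right _ (by positivity))

theorem w_eq (k n : ℕ) (hn : n < 3 ^ k) : w n = (fw^[k] [0]).getD n 0 := by
  have h1 : n < 3 ^ (n + 1) :=
    lt_trans (Nat.lt_pow_self (by norm_num)) (Nat.pow_lt_pow_right (by norm_num) (Nat.lt_succ_self n))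
  unfold w
  rcases le_total k (n + 1) with h | h
  · obtain ⟨d, hd⟩ := Nat.exists_eq_add_of_le h
    rw [hd]; exact W_stable k d n hn
  · obtain ⟨d, hd⟩ := Nat.exists_eq_add_of_le h
    rw [hd]; exact (W_stable (n + 1) d n h1).symm

theorem w_block (n : ℕ) : w (3 * n) = 0 ∧ w (3 * n + 1) = g1 (w n) ∧ w (3 * n + 2) = g2 (w n) := by
  have h : n < 3 ^ n := Nat.lt_pow_self (by norm_num)
  have h3 : 3 * n + 2 < 3 ^ (n + 1) := by rw [pow_succ]; omega
  rw [w_eq (n + 1) (3 * n) (by omega), w_eq (n + 1) (3 * n + 1) (by omega),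
    w_eq (n + 1) (3 * n + 2) h3, w_eq n n h, Function.iterate_succ_apply']
  exact fw_get _ _ (by rw [W_length]; exact h)

theorem w_zero (n : ℕ) : w (3 * n) = 0 := (w_block n).1
theorem w_one (n : ℕ) : w (3 * n + 1) = g1 (w n) := (w_block n).2.1
theorem w_two (n : ℕ) : w (3 * n + 2) = g2 (w n) := (w_block n).2.2

/-- Residue classes of positions constrain letters. -/
theorem w_res0 (n : ℕ) (h : n % 3 = 0) : w n = 0 := by
  obtain ⟨k, rfl⟩ : ∃ k, n = 3 * k := ⟨n / 3, by omega⟩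
  exact w_zero k
theorem w_res1 (n : ℕ) (h : n % 3 = 1) : w n = 1 ∨ w n = 3 := by
  obtain ⟨k, rfl⟩ : ∃ k, n = 3 * k + 1 := ⟨n / 3, by omega⟩
  rw [w_one]; generalize w k = x; revert x; decide
theorem w_res2 (n : ℕ) (h : n % 3 = 2) : w n ≠ 3 := by
  obtain ⟨k, rfl⟩ : ∃ k, n = 3 * k + 2 := ⟨n / 3, by omega⟩
  rw [w_two]; generalize w k = x; revert x; decide

/-! ### Prefix counts and repetitions -/

/-- Number of occurrences of `a` among the first `n` letters of `w`. -/
def cnt (a : A4) : ℕ → ℕ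
  | 0 => 0
  | n + 1 => cnt a n + if w n = a then 1 else 0

/-- The factor of length `q` at position `i` lies in the kernel. -/
def Ker (i q : ℕ) : Prop := ∀ a, cnt a (i + q) % 4 = cnt a i % 4

/-- `w` agrees with its shift by `q` on `[a, b)`. -/
def Run (q a b : ℕ) : Prop := ∀ j, a ≤ j → j < b → w j = w (j + q)

def Bad (q e : ℕ) : Prop := ∃ i, Ker i q ∧ Run q i (i + e)

theorem Bad.mono {q e e' : ℕ} (h : Bad q e) (he : e' ≤ e) : Bad q e' := by
  obtain ⟨i, h1, h2⟩ := h
  exact ⟨i, h1, fun j hj hj' => h2 j hj (by omega)⟩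

theorem Ker.step {i q : ℕ} (h : w i = w (i + q)) : Ker i q ↔ Ker (i + 1) q := by
  unfold Ker
  refine forall_congr' fun a => ?_
  rw [Nat.add_right_comm, cnt, cnt, h]
  omega

theorem cnt_three (n : ℕ) :
    cnt 0 (3 * n) = 2 * cnt 0 n + cnt 1 n + 2 * cnt 2 n + cnt 3 n ∧
    cnt 1 (3 * n) = cnt 0 n + cnt 1 n + cnt 3 n ∧
    cnt 2 (3 * n) = cnt 1 n ∧
    cnt 3 (3 * n) = cnt 2 n + cnt 3 n := by
  induction n with
  | zero => simp [cnt]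
  | succ n ih =>
    obtain ⟨h0, h1, h2, h3⟩ := ih
    rw [show 3 * (n + 1) = 3 * n + 1 + 1 + 1 by ring]
    simp only [cnt, w_zero, w_one, w_two, h0, h1, h2, h3]
    generalize w n = x
    fin_cases x <;> simp [g1, g2] <;> omega

theorem cnt_sum (n : ℕ) : cnt 0 n + cnt 1 n + cnt 2 n + cnt 3 n = n := by
  induction n with
  | zero => simp [cnt]
  | succ n ih =>
    simp only [cnt]
    generalize w n = x
    fin_cases x <;> simp <;> omega

theorem Ker.four {i q : ℕ} (h : Ker i q) : q % 4 = 0 := by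
  have h0 := h 0
  have h1 := h 1
  have h2 := h 2
  have h3 := h 3
  have := cnt_sum i
  have := cnt_sum (i + q)
  omega

theorem Ker.descend {i q : ℕ} (h : Ker (3 * i) (3 * q)) : Ker i q := by
  have h0 := h 0
  have h1 := h 1
  have h2 := h 2
  have h3 := h 3
  rw [← Nat.mul_add] at h0 h1 h2 h3
  obtain ⟨a0, a1, a2, a3⟩ := cnt_three i
  obtain ⟨b0, b1, b2, b3⟩ := cnt_three (i + q)
  intro a
  fin_cases a <;> simp <;> omega

/-- Synchronisation. -/
theorem Bad.three {q e : ℕ} (h : Bad q e) (he : 3 ≤ e) : q % 3 = 0 := by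
  obtain ⟨i, -, h⟩ := h
  by_contra hq
  rcases (show q % 3 = 1 ∨ q % 3 = 2 by omega) with hq | hq
  · obtain ⟨j, hj, hj', hm⟩ : ∃ j, i ≤ j ∧ j < i + e ∧ j % 3 = 0 :=
      ⟨3 * ((i + 2) / 3), by omega, by omega, by omega⟩
    have := h j hj hj'
    rw [w_res0 j hm] at this
    rcases w_res1 (j + q) (by omega) with h' | h' <;> rw [h'] at this <;> exact absurd this (by decide)
  · obtain ⟨j, hj, hj', hm⟩ : ∃ j, i ≤ j ∧ j < i + e ∧ j % 3 = 1 :=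
      ⟨3 * ((i + 1) / 3) + 1, by omega, by omega, by omega⟩
    have := h j hj hj'
    rw [w_res0 (j + q) (by omega)] at this
    rcases w_res1 j hm with h' | h' <;> rw [h'] at this <;> exact absurd this (by decide)

theorem g_inj : ∀ x y : A4, g1 x = g1 y → g2 x = g2 y → x = y := by decide

/-- A run for `3m` descends to a run for `m`. -/
theorem Run.descend {m a b : ℕ} (h : Run (3 * m) a b) : Run m ((a + 1) / 3) (b / 3) := by
  intro j hj hj'
  have h1 := h (3 * j + 1) (by omega) (by omega)
  have h2 := h (3 * j + 2) (by omega) (by omega)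
  rw [show 3 * j + 1 + 3 * m = 3 * (j + m) + 1 by ring, w_one, w_one] at h1
  rw [show 3 * j + 2 + 3 * m = 3 * (j + m) + 2 by ring, w_two, w_two] at h2
  exact g_inj _ _ h1 h2

theorem Ker.run_descend {m a b : ℕ} (hk : Ker a (3 * m)) (h : Run (3 * m) a b) (hab : a < b) :
    Ker ((a + 1) / 3) m := by
  apply Ker.descend
  rcases (show a % 3 = 0 ∨ a % 3 = 1 ∨ a % 3 = 2 by omega) with ha | ha | ha
  · rwa [show 3 * ((a + 1) / 3) = a by omega]
  · rw [Ker.step (by rw [← Nat.mul_add, w_zero, w_zero]), show 3 * ((a + 1) / 3) + 1 = a by omega]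
    exact hk
  · rw [show 3 * ((a + 1) / 3) = a + 1 by omega, ← Ker.step (h a le_rfl hab)]
    exact hk

theorem Bad.of_run {m a b e : ℕ} (hk : Ker a (3 * m)) (h : Run (3 * m) a b) (hab : a < b)
    (he : e ≤ b / 3 - (a + 1) / 3) : Bad m e :=
  ⟨(a + 1) / 3, hk.run_descend h hab, fun j hj hj' => h.descend j hj (by omega)⟩

/-- Descent losing three letters. -/
theorem Bad.descend {m e : ℕ} (h : Bad (3 * m) e) (he : 1 ≤ e) : Bad m ((e - 1) / 3) := by
  obtain ⟨i, hk, h⟩ := h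
  exact Bad.of_run hk h (by omega) (by omega)

theorem left_pair : ∀ x y : A4, g2 x = g2 y → x = y ∨ (x = 0 ∧ y = 2) ∨ (x = 2 ∧ y = 0) := by
  decide

/-- Sharper descent when `m ≡ 2 mod 3`. -/
theorem Bad.descend_left {m e : ℕ} (h : Bad (3 * m) e) (hm : m % 3 = 2) (he : 4 ≤ e) :
    Bad m (e / 3) := by
  obtain ⟨i, hk, h⟩ := h
  rcases (show i % 3 ≠ 2 ∨ i % 3 = 2 by omega) with hi | hi
  · exact Bad.of_run hk h (by omega) (by omega)
  obtain ⟨k, rfl⟩ : ∃ k, i = 3 * k + 2 := ⟨i / 3, by omega⟩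
  have hw : w (k + 1) = w (k + 1 + m) := h.descend (k + 1) (by omega) (by omega)
  have h2 := h (3 * k + 2) le_rfl (by omega)
  rw [show 3 * k + 2 + 3 * m = 3 * (k + m) + 2 by ring, w_two, w_two] at h2
  have hk1 : (k + 1) % 3 ≠ 1 := by
    intro hc
    rw [w_res0 (k + 1 + m) (by omega)] at hw
    rcases w_res1 _ hc with h' | h' <;> rw [h'] at hw <;> exact absurd hw (by decide)
  have heq : w k = w (k + m) := by
    rcases left_pair _ _ h2 with h' | h'
    · exact h'
    · exfalso
      rcases (show k % 3 = 1 ∨ (k + m) % 3 = 1 by omega) with hc | hc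
      · rcases w_res1 _ hc with h3 | h3 <;> rw [h3] at h' <;> revert h' <;> simp
      · rcases w_res1 _ hc with h3 | h3 <;> rw [h3] at h' <;> revert h' <;> simp
  have h1 : w (3 * k + 1) = w (3 * k + 1 + 3 * m) := by
    rw [show 3 * k + 1 + 3 * m = 3 * (k + m) + 1 by ring, w_one, w_one, heq]
  refine Bad.of_run (a := 3 * k + 1) (b := 3 * k + 2 + e) ((Ker.step h1).2 hk) ?_ (by omega) (by omega)
  intro j hj hj'
  rcases (show j = 3 * k + 1 ∨ 3 * k + 2 ≤ j by omega) with rfl | hj''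
  · exact h1
  · exact h j hj'' hj'

theorem right_pair : ∀ x y : A4, g1 x = g1 y → g1 (g2 x) = g1 (g2 y) →
    x = y ∨ (x = 2 ∧ y = 3) ∨ (x = 3 ∧ y = 2) := by decide
theorem g1_inj' : ∀ x y : A4, g1 (g1 x) = g1 (g1 y) → g1 x = g1 y := by decide

/-- Sharper descent for `q = 9m`. -/
theorem Bad.descend_right {m e : ℕ} (h : Bad (3 * (3 * m)) e)
    (hm : m % 3 = 0 ∨ m % 3 = 2) (he : 18 ≤ e) : Bad (3 * m) (e / 3) := by
  obtain ⟨i, hk, h⟩ := h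
  rcases (show (i + e) % 3 ≠ 2 ∨ (i + e) % 3 = 2 by omega) with hi | hi
  · exact Bad.of_run hk h (by omega) (by omega)
  -- the last, partial block extends
  obtain ⟨b, hb⟩ : ∃ b, i + e = 3 * b + 2 := ⟨(i + e) / 3, by omega⟩
  have h1 := h (3 * b + 1) (by omega) (by omega)
  rw [show 3 * b + 1 + 3 * (3 * m) = 3 * (b + 3 * m) + 1 by ring, w_one, w_one] at h1
  have heq : w b = w (b + 3 * m) := by
    rcases (show b % 3 = 0 ∨ b % 3 = 1 ∨ b % 3 = 2 by omega) with hr | hr | hr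
    · rw [w_res0 b hr, w_res0 (b + 3 * m) (by omega)]
    · obtain ⟨c, rfl⟩ : ∃ c, b = 3 * c + 1 := ⟨b / 3, by omega⟩
      rw [show 3 * c + 1 + 3 * m = 3 * (c + m) + 1 by ring, w_one, w_one] at h1 ⊢
      exact g1_inj' _ _ h1
    · obtain ⟨c, rfl⟩ : ∃ c, b = 3 * c + 2 := ⟨b / 3, by omega⟩
      have h0 := h.descend (3 * c + 1) (by omega) (by omega)
      rw [show 3 * c + 1 + 3 * m = 3 * (c + m) + 1 by ring, w_one, w_one] at h0
      rw [show 3 * c + 2 + 3 * m = 3 * (c + m) + 2 by ring, w_two, w_two] at h1 ⊢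
      suffices w c = w (c + m) by rw [this]
      rcases right_pair _ _ h0 h1 with h' | h'
      · exact h'
      · exfalso
        have key : ∀ n, w n = 2 → n % 3 = 2 := by
          intro n hn
          by_contra hc
          rcases (show n % 3 = 0 ∨ n % 3 = 1 by omega) with hc | hc
          · rw [w_res0 n hc] at hn; exact absurd hn (by decide)
          · rcases w_res1 n hc with h3 | h3 <;> rw [h3] at hn <;> exact absurd hn (by decide)
        have key' : ∀ n, w n = 3 → n % 3 = 1 := by
          intro n hn
          by_contra hc
          rcases (show n % 3 = 0 ∨ n % 3 = 2 by omega) with hc | hc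
          · rw [w_res0 n hc] at hn; exact absurd hn (by decide)
          · exact w_res2 n hc hn
        rcases h' with ⟨ha, hb'⟩ | ⟨ha, hb'⟩
        · have e1 := key _ ha
          have e2 := key' _ hb'
          have hw := h.descend.descend (c - 1) (by omega) (by omega)
          rw [w_res0 (c - 1 + m) (by omega)] at hw
          rcases w_res1 (c - 1) (by omega) with h3 | h3 <;> rw [h3] at hw <;>
            exact absurd hw (by decide)
        · have e1 := key' _ ha
          have e2 := key _ hb'
          omega
  refine Bad.of_run (b := 3 * b + 3) hk ?_ (by omega) (by omega)
  intro j hj hj'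
  rcases (show j = 3 * b + 2 ∨ j < i + e by omega) with rfl | hj''
  · rw [show 3 * b + 2 + 3 * (3 * m) = 3 * (b + 3 * m) + 2 by ring, w_two, w_two, heq]
  · exact h j hj hj''

/-! ### The finite check -/

/-- The list `u` occurs in `w` at position `k`. -/
def Occ : List A4 → ℕ → Prop
  | [], _ => True
  | x :: u, k => w k = x ∧ Occ u (k + 1)

theorem Occ.fw {u : List A4} {k : ℕ} (h : Occ u k) : Occ (fw u) (3 * k) := by
  induction u generalizing k with
  | nil => trivial
  | cons x u ih =>
    obtain ⟨rfl, h⟩ := h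
    rw [fw_cons]
    exact ⟨w_zero k, w_one k, w_two k, ih h⟩

def thr (q : ℕ) : ℕ :=
  if q < 68 || q == 72 || q == 76 then 1 else if q < 104 || q == 108 || q == 112 then 2 else 3

/-- Letters encoded as powers of `256`, so that a sum of codes packs the four counts. -/
def enc : A4 → ℕ
  | 0 => 1
  | 1 => 256
  | 2 => 65536
  | 3 => 16777216

theorem enc_eq (x : A4) : enc x = (if x = 0 then 1 else 0) + 256 * (if x = 1 then 1 else 0) +
    65536 * (if x = 2 then 1 else 0) + 16777216 * (if x = 3 then 1 else 0) := by
  revert x; decide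

/-- The encoded list `u` occurs in `w` at position `k`. -/
def OccN : List ℕ → ℕ → Prop
  | [], _ => True
  | x :: u, k => enc (w k) = x ∧ OccN u (k + 1)

theorem Occ.enc {u : List A4} {k : ℕ} (h : Occ u k) : OccN (u.map enc) k := by
  induction u generalizing k with
  | nil => trivial
  | cons x u ih => exact ⟨by rw [h.1], ih h.2⟩

def pm : ℕ → List ℕ → List ℕ → Bool
  | e + 1, x :: u, y :: v => Nat.beq x y && pm e u v
  | _, _, _ => true

theorem pm_spec (e : ℕ) (u v : List ℕ) (i j : ℕ) (hu : OccN u i) (hv : OccN v j)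
    (h : ∀ t < e, w (i + t) = w (j + t)) : pm e u v = true := by
  induction e generalizing u v i j with
  | zero => simp [pm]
  | succ e ih =>
    cases u with
    | nil => simp [pm]
    | cons x u =>
      cases v with
      | nil => simp [pm]
      | cons y v =>
        obtain ⟨rfl, hu⟩ := hu
        obtain ⟨rfl, hv⟩ := hv
        have h0 := h 0 (by omega)
        simp only [Nat.add_zero] at h0
        simp only [pm, h0, Nat.beq_refl, Bool.true_and]
        apply ih u v _ _ hu hv
        intro t ht
        have := h (t + 1) (by omega)
        rw [Nat.add_assoc, Nat.add_comm 1 t, Nat.add_assoc, Nat.add_comm 1 t]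
        exact this

/-- The expensive part of the slowCheck, run only if the count of the first letter is `0 mod 4`. -/
def slowCheck (q c : ℕ) (u v : List ℕ) : Bool :=
  !((c / 256 % 4 == 0 && c / 65536 % 4 == 0 && c / 16777216 % 4 == 0 && !(q == 0)) && pm (thr q) u v)

/-- Scan a window: `u` is the window, `v` the window shifted by `q`, and `c` packs
the letter counts of the first `q` letters; only multiples of `4` need to be tested. -/
def scan : ℕ → List ℕ → List ℕ → ℕ → ℕ → Bool
  | 0, _, _, _, _ => true
  | n + 1, u, x :: y :: z :: t :: v, q, c =>
    (cond (Nat.beq (Nat.mod c 4) 0) (slowCheck q c u (x :: y :: z :: t :: v)) true) &&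
      scan n u v (Nat.add q 4) (Nat.add c (Nat.add (Nat.add x y) (Nat.add z t)))
  | _ + 1, _, _, _, _ => false

/-- Packed counts of the factor of length `q` at position `i`. -/
def pack (i q : ℕ) : ℕ := (cnt 0 (i + q) - cnt 0 i) + 256 * (cnt 1 (i + q) - cnt 1 i) +
  65536 * (cnt 2 (i + q) - cnt 2 i) + 16777216 * (cnt 3 (i + q) - cnt 3 i)

theorem cnt_mono (a : A4) (i q : ℕ) : cnt a i ≤ cnt a (i + q) := by
  induction q with
  | zero => exact le_rfl
  | succ q ih => rw [← Nat.add_assoc, cnt]; omega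

theorem pack_succ (i q : ℕ) : pack i (q + 1) = pack i q + enc (w (i + q)) := by
  have h0 := cnt_mono 0 i q
  have h1 := cnt_mono 1 i q
  have h2 := cnt_mono 2 i q
  have h3 := cnt_mono 3 i q
  rw [enc_eq]
  unfold pack
  have hz : ∀ a, cnt a (i + (q + 1)) = cnt a (i + q) + if w (i + q) = a then 1 else 0 :=
    fun a => rfl
  rw [hz, hz, hz, hz]
  omega

theorem digits (a b c d n : ℕ) (hn : n = a + 256 * b + 65536 * c + 16777216 * d)
    (ha : a < 256) (hb : b < 256) (hc : c < 256) :
    n % 4 = a % 4 ∧ n / 256 % 4 = b % 4 ∧ n / 65536 % 4 = c % 4 ∧ n / 16777216 % 4 = d % 4 := by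
  have h1 : n / 256 = b + 256 * c + 65536 * d := by omega
  have h2 : n / 65536 = c + 256 * d := by omega
  have h3 : n / 16777216 = d := by omega
  rw [h1, h2, h3]
  omega

theorem scan_spec (n : ℕ) (u v : List ℕ) (q c i : ℕ) (hs : scan n u v q c = true)
    (hu : OccN u i) (hv : OccN v (i + q)) (hc : c = pack i q) (hn : q + 4 * n < 256)
    (hq4 : q % 4 = 0)
    (q' : ℕ) (h1 : q ≤ q') (h2 : q' < q + 4 * n) (h3 : q' ≠ 0) (hk : Ker i q') :
    ¬ Run q' i (i + thr q') := by
  induction n generalizing v q c with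
  | zero => omega
  | succ n ih =>
    match v, hs, hv with
    | [], hs, _ => simp [scan] at hs
    | [_], hs, _ => simp [scan] at hs
    | [_, _], hs, _ => simp [scan] at hs
    | [_, _, _], hs, _ => simp [scan] at hs
    | x :: y :: z :: t :: v, hs, hv =>
      rw [scan, Bool.and_eq_true] at hs
      obtain ⟨hs1, hs2⟩ := hs
      obtain ⟨hx, hy, hz, ht, hv'⟩ := id hv
      have hq4' := hk.four
      rcases (show q' = q ∨ q + 4 ≤ q' by omega) with rfl | hlt
      · intro hr
        have e0 := hk 0
        have e1 := hk 1
        have e2 := hk 2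
        have e3 := hk 3
        have m0 := cnt_mono 0 i q'
        have m1 := cnt_mono 1 i q'
        have m2 := cnt_mono 2 i q'
        have m3 := cnt_mono 3 i q'
        have s0 := cnt_sum i
        have s1 := cnt_sum (i + q')
        have hp : pm (thr q') u (x :: y :: z :: t :: v) = true := by
          apply pm_spec _ _ _ _ _ hu hv
          intro t ht
          have := hr (i + t) (by omega) (by omega)
          rwa [Nat.add_right_comm] at this
        obtain ⟨d0, d1, d2, d3⟩ := digits _ _ _ _ c hc (by omega) (by omega) (by omega)
        have c0 : Nat.mod c 4 = 0 := by change c % 4 = 0; omega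
        rw [c0] at hs1
        simp only [Nat.beq_refl, cond_true, slowCheck, hp] at hs1
        rw [show c / 256 % 4 = 0 by omega, show c / 65536 % 4 = 0 by omega,
          show c / 16777216 % 4 = 0 by omega] at hs1
        simp [h3] at hs1
      · refine ih _ _ _ hs2 hv' ?_ ?_ ?_ hlt ?_
        · change c + (x + y + (z + t)) = pack i (q + 1 + 1 + 1 + 1)
          rw [pack_succ, pack_succ, pack_succ, pack_succ, hc, ← hx, ← hy, ← hz, ← ht]
          simp only [Nat.add_assoc]
        · change q + 4 + 4 * n < 256
          omega
        · change (q + 4) % 4 = 0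
          omega
        · change q' < q + 4 + 4 * n
          omega

/-- Scan the windows at the first `n` positions. -/
def scanAll : ℕ → List ℕ → Bool
  | 0, _ => true
  | _ + 1, [] => false
  | n + 1, x :: u => scan 34 (x :: u) (x :: u) 0 0 && scanAll n u

theorem scanAll_spec (n : ℕ) (u : List ℕ) (k : ℕ) (hs : scanAll n u = true) (hu : OccN u k)
    (r : ℕ) (hr : r < n) (q : ℕ) (h2 : q < 133) (h3 : q ≠ 0) (hk : Ker (k + r) q) :
    ¬ Run q (k + r) (k + r + thr q) := by
  induction n generalizing u k r with
  | zero => omega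
  | succ n ih =>
    cases u with
    | nil => simp [scanAll] at hs
    | cons x u =>
      rw [scanAll, Bool.and_eq_true] at hs
      cases r with
      | zero =>
        exact scan_spec 34 _ _ 0 0 _ hs.1 hu hu (by simp [pack]) (by omega) rfl q (by omega)
          (by omega) h3 hk
      | succ r =>
        rw [show k + (r + 1) = k + 1 + r by ring] at hk ⊢
        exact ih u (k + 1) hs.2 hu.2 r (by omega) hk

def pairs : List (A4 × A4) :=
  [(0, 0), (0, 1), (0, 3), (1, 0), (1, 2), (2, 0), (3, 0), (3, 1)]

def triples : List (A4 × A4 × A4) :=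
  [(0, 0, 1), (0, 0, 3), (0, 1, 0), (0, 1, 2), (0, 3, 0), (0, 3, 1), (1, 0, 0), (1, 0, 1),
    (1, 2, 0), (2, 0, 1), (2, 0, 3), (3, 0, 0), (3, 1, 0)]

theorem pairs_mem (k : ℕ) : (w k, w (k + 1)) ∈ pairs := by
  induction k using Nat.strong_induction_on with
  | _ k ih =>
    rcases (show k % 3 = 0 ∨ k % 3 = 1 ∨ k % 3 = 2 by omega) with h | h | h
    · obtain ⟨n, rfl⟩ : ∃ n, k = 3 * n := ⟨k / 3, by omega⟩
      rw [w_zero, w_one]; generalize w n = x; revert x; decide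
    · obtain ⟨n, rfl⟩ : ∃ n, k = 3 * n + 1 := ⟨k / 3, by omega⟩
      rw [w_one, w_two]; generalize w n = x; revert x; decide
    · obtain ⟨n, rfl⟩ : ∃ n, k = 3 * n + 2 := ⟨k / 3, by omega⟩
      rw [w_two, show 3 * n + 2 + 1 = 3 * (n + 1) by ring, w_zero]
      generalize w n = x; revert x; decide

theorem triples_mem (k : ℕ) : (w k, w (k + 1), w (k + 2)) ∈ triples := by
  rcases (show k % 3 = 0 ∨ k % 3 = 1 ∨ k % 3 = 2 by omega) with h | h | h
  · obtain ⟨n, rfl⟩ : ∃ n, k = 3 * n := ⟨k / 3, by omega⟩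
    rw [w_zero, w_one, w_two]; generalize w n = x; revert x; decide
  · obtain ⟨n, rfl⟩ : ∃ n, k = 3 * n + 1 := ⟨k / 3, by omega⟩
    rw [w_one, w_two, show 3 * n + 1 + 2 = 3 * (n + 1) by ring, w_zero]
    generalize w n = x; revert x; decide
  · obtain ⟨n, rfl⟩ : ∃ n, k = 3 * n + 2 := ⟨k / 3, by omega⟩
    rw [w_two, show 3 * n + 2 + 1 = 3 * (n + 1) by ring, w_zero,
      show 3 * n + 2 + 2 = 3 * (n + 1) + 1 by ring, w_one]
    have := pairs_mem n
    revert this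
    generalize w n = x
    generalize w (n + 1) = y
    revert x y; decide

set_option maxRecDepth 100000 in
theorem check_triples :
    (triples.all fun t => scanAll 81 ((fw (fw (fw (fw [t.1, t.2.1, t.2.2])))).map enc)) = true := by
  decide +kernel

theorem base {q : ℕ} (h2 : q < 133) (h3 : q ≠ 0) : ¬ Bad q (thr q) := by
  rintro ⟨i, hk, hr⟩
  obtain ⟨k, r, hr', rfl⟩ : ∃ k r, r < 81 ∧ i = 81 * k + r :=
    ⟨i / 81, i % 81, by omega, by omega⟩
  have hs := (List.all_eq_true.1 check_triples) _ (triples_mem k)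
  have ho : Occ [w k, w (k + 1), w (k + 2)] k := ⟨rfl, rfl, rfl, trivial⟩
  have ho' := ho.fw.fw.fw.fw.enc
  rw [show 3 * (3 * (3 * (3 * k))) = 81 * k by ring] at ho'
  exact scanAll_spec 81 _ _ hs ho' r hr' q h2 h3 hk hr

/-! ### All periods up to 1966 -/

/-- Certificate that no repetition with period `q` and excess `e` exists. -/
def ok : ℕ → ℕ → ℕ → Bool
  | 0, _, _ => false
  | n + 1, q, e =>
    q % 4 != 0 || (decide (3 ≤ e) && q % 3 != 0) || (decide (q < 133) && decide (thr q ≤ e)) ||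
    (decide (18 ≤ e) && (q % 27 == 0 || q % 27 == 18) && ok n (q / 3) (e / 3)) ||
    (decide (4 ≤ e) && q % 9 == 6 && ok n (q / 3) (e / 3)) ||
    (decide (1 ≤ e) && q % 3 == 0 && ok n (q / 3) ((e - 1) / 3))

theorem ok_spec (n q e : ℕ) (hq : q ≠ 0) (h : ok n q e = true) : ¬ Bad q e := by
  induction n generalizing q e with
  | zero => simp [ok] at h
  | succ n ih =>
    intro hB
    simp only [ok, Bool.or_eq_true, Bool.and_eq_true, bne_iff_ne, beq_iff_eq, decide_eq_true_eq,
      ne_eq] at h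
    rcases h with ((((h | h) | h) | h) | h) | h
    · obtain ⟨i, hk, -⟩ := hB
      exact h hk.four
    · exact h.2 (hB.three h.1)
    · exact base h.1 hq (hB.mono h.2)
    · obtain ⟨⟨h1, h2⟩, h3⟩ := h
      obtain ⟨m, rfl⟩ : ∃ m, q = 3 * (3 * m) := ⟨q / 9, by omega⟩
      rw [Nat.mul_div_cancel_left _ (by norm_num)] at h3
      exact ih _ _ (by omega) h3 (hB.descend_right (by omega) h1)
    · obtain ⟨⟨h1, h2⟩, h3⟩ := h
      obtain ⟨m, rfl⟩ : ∃ m, q = 3 * m := ⟨q / 3, by omega⟩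
      rw [Nat.mul_div_cancel_left _ (by norm_num)] at h3
      exact ih _ _ (by omega) h3 (hB.descend_left (by omega) h1)
    · obtain ⟨⟨h1, h2⟩, h3⟩ := h
      obtain ⟨m, rfl⟩ : ∃ m, q = 3 * m := ⟨q / 3, by omega⟩
      rw [Nat.mul_div_cancel_left _ (by norm_num)] at h3
      exact ih _ _ (by omega) h3 (hB.descend h1)

theorem ok_all : ∀ q < 1967, q = 0 ∨ ok 6 q ((q + 33) / 34) = true := by
  decide +kernel

theorem bound_zero {q e : ℕ} (hq : q ≠ 0) (hle : q ≤ 1966) (h : Bad q e) : 34 * e < q := by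
  by_contra hc
  rcases ok_all q (by omega) with h' | h'
  · exact hq h'
  · exact ok_spec _ _ _ hq h' (h.mono (by omega))

theorem bound (s q e : ℕ) (hq : q ≠ 0) (hle : q ≤ 1966 * 3 ^ s) (h : Bad q e) :
    ((q + e : ℕ) : ℚ) / q < 35 / 34 + (3 / 1966) * ∑ j ∈ Finset.range s, ((3 : ℚ) ^ j)⁻¹ := by
  induction s generalizing q e with
  | zero =>
    have h1 := bound_zero hq (by simpa using hle) h
    have hq' : (0 : ℚ) < q := by exact_mod_cast Nat.pos_of_ne_zero hq
    have h2 : (34 : ℚ) * e < q := by exact_mod_cast h1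
    rw [div_lt_iff₀ hq']
    push_cast
    simp
    linarith
  | succ s ih =>
    have hq' : (0 : ℚ) < q := by exact_mod_cast Nat.pos_of_ne_zero hq
    rw [Finset.sum_range_succ]
    have hS : (0 : ℚ) ≤ ∑ j ∈ Finset.range s, ((3 : ℚ) ^ j)⁻¹ :=
      Finset.sum_nonneg fun j _ => by positivity
    have hp : (0 : ℚ) < ((3 : ℚ) ^ s)⁻¹ := by positivity
    by_cases hs : q ≤ 1966 * 3 ^ s
    · have := ih q e hq hs h
      linarith
    push Not at hs
    have hs1 : 1966 < q := lt_of_le_of_lt (Nat.le_mul_of_pos_right _ (by positivity)) hs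
    by_cases he : 3 ≤ e
    · have h3 := h.three he
      obtain ⟨m, rfl⟩ : ∃ m, q = 3 * m := ⟨q / 3, by omega⟩
      have hm := ih m _ (by omega) (by rw [pow_succ] at hle; omega) (h.descend (by omega))
      have hm' : (0 : ℚ) < m := by exact_mod_cast (show 0 < m by omega)
      have hsq : (1966 : ℚ) * 3 ^ s < 3 * m := by exact_mod_cast hs
      have h1 : (3 : ℚ) / (3 * m) ≤ 3 / 1966 * ((3 : ℚ) ^ s)⁻¹ := by
        rw [← div_eq_mul_inv, div_div]
        exact div_le_div_of_nonneg_left (by norm_num) (by positivity) hsq.le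
      have h2 : ((3 * m + e : ℕ) : ℚ) / ((3 * m : ℕ) : ℚ) ≤
          ((m + (e - 1) / 3 : ℕ) : ℚ) / m + 3 / (3 * m) := by
        have : ((3 * m + e : ℕ) : ℚ) ≤ 3 * ((m + (e - 1) / 3 : ℕ) : ℚ) + 3 := by
          exact_mod_cast (show 3 * m + e ≤ 3 * (m + (e - 1) / 3) + 3 by omega)
        calc ((3 * m + e : ℕ) : ℚ) / ((3 * m : ℕ) : ℚ)
            ≤ (3 * ((m + (e - 1) / 3 : ℕ) : ℚ) + 3) / ((3 * m : ℕ) : ℚ) := by gcongr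
          _ = ((m + (e - 1) / 3 : ℕ) : ℚ) / m + 3 / (3 * m) := by
            rw [Nat.cast_mul]; push_cast; field_simp
      linarith
    · have h1 : ((q + e : ℕ) : ℚ) / q < 35 / 34 := by
        rw [div_lt_iff₀ hq']
        have : 34 * (q + e) < 35 * q := by omega
        have : (34 : ℚ) * ((q + e : ℕ) : ℚ) < 35 * q := by exact_mod_cast this
        linarith
      linarith

theorem count_range (a : A4) (i q : ℕ) :
    cnt a (i + q) = cnt a i + ((List.range q).map fun k => w (i + k)).count a := by
  induction q with
  | zero => simp
  | succ q ih =>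
    rw [List.range_succ, List.map_append, List.count_append, ← Nat.add_assoc, cnt, ih]
    simp [List.count_singleton, Nat.add_assoc]

/-- For every `s ≥ 0` and every factor `v` of `w` having a kernel period `q ≤ 1966·3^s`,
`|v|/q < 35/34 + (3/1966)·∑_{j=0}^{s-1} 3^{-j}`. -/
theorem stmt0 (s : ℕ) (v : List A4) (q : ℕ)
    (hfac : FactorOf v w) (hker : KernelPeriod v q) (hq : q ≤ 1966 * 3 ^ s) :
    (v.length : ℚ) / q < 35 / 34 + (3 / 1966) * ∑ j ∈ Finset.range s, ((3 : ℚ) ^ j)⁻¹ := by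
  obtain ⟨i, hi⟩ := hfac
  obtain ⟨hle, ⟨hq1, hper⟩, hkp⟩ := hker
  obtain ⟨e, he⟩ := Nat.exists_eq_add_of_le hle
  unfold OccursAt at hi
  have hget : ∀ k < v.length, v[k]? = some (w (i + k)) := by
    intro k hk
    rw [hi]
    simp [hk]
  have hB : Bad q e := by
    refine ⟨i, ?_, ?_⟩
    · intro a
      have h4 := hkp a
      rw [hi, ← List.map_take, List.take_range, Nat.min_eq_left hle] at h4
      rw [count_range a i q]
      omega
    · intro j hj hj'
      have h := hper (j - i) (by omega)
      rw [hget _ (by omega), hget _ (by omega)] at h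
      rw [show j + q = i + (j - i + q) by omega]
      rw [show i + (j - i) = j by omega] at h
      exact Option.some.inj h
  rw [he]
  exact bound s q e (by omega) hq hB
end

section
/- For each n ∈ {30, 31, 32}, there exists an infinite word x over an alphabet of n letters such that every factor of x having period q has length at most n·q/(n−1); that is, x contains no factor of exponent strictly greater than n/(n−1), so the repetitive threshold satisfies RT(n) ≤ n/(n−1) (Dejean's conjecture for n = 30, 31, 32). -/
namespace Dej

/-! ### Bit-plane machinery -/

/-- The number whose `i`-th bit is the `b`-th bit of the `i`-th entry of `l`. -/
noncomputable def plane (b : ℕ) (l : List ℕ) : ℕ :=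
  List.rec 0 (fun y _ ih => Nat.add (Nat.mod (Nat.shiftRight y b) 2) (Nat.mul 2 ih)) l

/-- `diff PL p` has bit `i` set iff some pair of planes differs at `i` and `i + p`. -/
noncomputable def diff (PL : List (ℕ × ℕ)) (p : ℕ) : ℕ :=
  List.rec 0 (fun PQ _ ih => Nat.lor (Nat.xor PQ.1 (Nat.shiftRight PQ.2 p)) ih) PL

/-- Every bit of the mask `M` is followed within `k` steps by a set bit of `A`. -/
noncomputable def cover (M k : ℕ) : ℕ → Bool :=
  Nat.rec (fun A => Nat.beq (Nat.land A M) M)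
    (fun _ ih A => cond (Nat.beq (Nat.land A M) M) true
      (ih (Nat.lor A (Nat.shiftRight A 1)))) k

noncomputable def chk (PL : List (ℕ × ℕ)) (p k len : ℕ) : Bool :=
  cover (Nat.sub (Nat.pow 2 (Nat.sub (Nat.add len 1) (Nat.add p k))) 1) (Nat.sub k 1) (diff PL p)

noncomputable def allLt (m : ℕ) (f : ℕ → Bool) : Bool :=
  Nat.rec true (fun i ih => cond (f i) ih false) m

noncomputable def allL {α : Type} (l : List α) (f : α → Bool) : Bool :=
  List.rec true (fun i _ ih => cond (f i) ih false) l

/-! ### The outer word -/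

def st (a r : ℕ) : ℕ :=
  (([[0, 1, 0], [0, 1, 2], [0, 3, 0], [0, 3, 1]] : List (List ℕ)).getD a []).getD r 0

noncomputable def fkl (k : ℕ) : ℕ → List ℕ :=
  Nat.rec (fun a => [a]) (fun _ ih a => ih (st a 0) ++ (ih (st a 1) ++ ih (st a 2))) k

def enc (c0 c1 c2 c3 : ℕ) : ℕ := c0 % 4 + 4 * (c1 % 4) + 16 * (c2 % 4) + 64 * (c3 % 4)

def ind (a b : ℕ) : ℕ := cond (Nat.beq a b) 1 0

noncomputable def sts (l : List ℕ) : ℕ → ℕ → ℕ → ℕ → List ℕ :=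
  List.rec (fun c0 c1 c2 c3 => [enc c0 c1 c2 c3])
    (fun a _ ih c0 c1 c2 c3 => enc c0 c1 c2 c3 ::
      ih (Nat.add c0 (ind a 0)) (Nat.add c1 (ind a 1))
        (Nat.add c2 (ind a 2)) (Nat.add c3 (ind a 3))) l

def pairs : List (ℕ × ℕ) := [(0, 0), (0, 1), (0, 3), (1, 0), (1, 2), (2, 0), (3, 0), (3, 1)]

def sixes : List (List ℕ) :=
  [[0, 0, 1, 0, 0, 1],
   [0, 0, 1, 0, 0, 3],
   [0, 0, 1, 2, 0, 1],
   [0, 0, 1, 2, 0, 3],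
   [0, 0, 3, 1, 0, 1],
   [0, 1, 0, 0, 1, 0],
   [0, 1, 0, 0, 1, 2],
   [0, 1, 0, 0, 3, 1],
   [0, 1, 2, 0, 1, 0],
   [0, 1, 2, 0, 3, 0],
   [0, 3, 0, 0, 1, 0],
   [0, 3, 1, 0, 1, 0],
   [0, 3, 1, 0, 1, 2],
   [1, 0, 0, 1, 0, 0],
   [1, 0, 0, 1, 2, 0],
   [1, 0, 0, 3, 1, 0],
   [1, 0, 1, 0, 0, 1],
   [1, 0, 1, 2, 0, 1],
   [1, 2, 0, 1, 0, 0],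
   [1, 2, 0, 3, 0, 0],
   [2, 0, 1, 0, 0, 1],
   [2, 0, 3, 0, 0, 1],
   [3, 0, 0, 1, 0, 0],
   [3, 1, 0, 1, 0, 0],
   [3, 1, 0, 1, 2, 0]]

def outk (q : ℕ) : ℕ := cond (Nat.ble q 204) ((q - 6) / 31 + 1) (q / 31)

noncomputable def planes (nb : ℕ) (l l' : List ℕ) : List (ℕ × ℕ) :=
  (List.range nb).map fun b => (plane b l, plane b l')

noncomputable def outOK (pr : ℕ × ℕ) : Bool :=
  allLt 612 fun q =>
    chk (planes 8 (sts (fkl 6 pr.1 ++ fkl 6 pr.2) 0 0 0 0)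
      (sts (fkl 6 pr.1 ++ fkl 6 pr.2) 0 0 0 0)) (q + 1) (outk (q + 1)) 1459

theorem out_check : allL pairs outOK = true := by decide +kernel

/-! ### The block words -/

def act (v0 v1 v2 v3 y : ℕ) : ℕ :=
  cond (Nat.ble 16 y) y
    (cond (Nat.ble 8 y) (cond (Nat.ble 12 y) (12 + (y + v3) % 4) (8 + (y + v2) % 4))
      (cond (Nat.ble 4 y) (4 + (y + v1) % 4) ((y + v0) % 4)))

def cls (y : ℕ) : ℕ := cond (Nat.ble 16 y) y (y / 4)

def et (a s : ℕ) : ℕ :=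
  (([[1, 0, 1, 0], [1, 1, 1, 0], [1, 0, 1, 1], [1, 1, 0, 1]] : List (List ℕ)).getD a []).getD s 0

structure Tab where
  n : ℕ
  L : ℕ
  R : ℕ
  base : List ℕ
  tails : List (List ℕ)

def Tab.T (t : Tab) (a : ℕ) : List ℕ := t.base ++ t.tails.getD a []

/-- Planes of the concatenation of blocks `as`. -/
noncomputable def Pw (t : Tab) (b : ℕ) (as : List ℕ) : ℕ → ℕ → ℕ → ℕ → ℕ :=
  List.rec (fun _ _ _ _ => 0)
    (fun a _ ih v0 v1 v2 v3 =>
      Nat.lor (plane b ((t.T a).map (act v0 v1 v2 v3)))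
        (Nat.shiftLeft (ih (v0 + et a 0) (v1 + et a 1) (v2 + et a 2) (v3 + et a 3)) t.L)) as

noncomputable def planesW (t : Tab) (as : List ℕ) : List (ℕ × ℕ) :=
  (List.range 5).map fun b => (Pw t b as 0 0 0 0, Pw t b as 0 0 0 0)

noncomputable def winOK (t : Tab) (as : List ℕ) : Bool :=
  cond (allLt (4 * (t.n - 1)) fun p => chk (planesW t as) (p + 1) ((p + 1) / (t.n - 1) + 1) (6 * t.L))
    (allLt 4 fun q => chk (planesW t as) ((q + 1) * t.L) ((q + 1) * t.R + 1) (6 * t.L)) false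

def Tab.S (t : Tab) (a : ℕ) : List ℕ := (t.T a ++ t.base.take 4).map cls

noncomputable def skelOK (t : Tab) : Bool :=
  allLt 4 fun a => allLt 4 fun a' => allLt (t.L - 1) fun p =>
    chk (planes 5 (t.S a) (t.S a')) (p + 1) 5 (t.L + 4)

/-- In `l`, the class `s` occurs in each window of length `29`. -/
noncomputable def gapOK (s : ℕ) (l : List ℕ) : ℕ → Bool :=
  List.rec (fun _ => true)
    (fun y _ ih c => cond (Nat.beq (cls y) s) (ih 29)
      (cond (Nat.beq c 1) false (ih (Nat.sub c 1)))) l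

noncomputable def lettersOK (t : Tab) : Bool :=
  allLt 4 fun a => cond (Nat.beq (t.T a).length t.L)
   (allL (t.T a) fun y => Nat.blt y t.n) false

/-- Common part of the blocks for `n = 30`. -/
def base30 : List ℕ :=
 [16, 29, 18, 17, 19, 21, 20, 0, 22, 3, 1, 23, 2, 4, 24, 7, 5, 25, 6, 8, 26, 11, 9, 27, 10, 12,
   28, 15, 13, 16, 14, 18, 29, 17, 21, 19, 0, 20, 3, 22, 23, 1, 4, 2, 7, 24, 25, 5, 8, 6, 11, 26,
   27, 9, 12, 10, 15, 28, 16, 13, 18, 14, 29, 21, 17, 0, 19, 3, 20, 23, 22, 4, 1, 7, 2, 25, 24,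
   8, 5, 11, 6, 27, 26, 12, 9, 15, 10, 16, 28, 18, 13, 14, 21, 29, 0, 17, 3, 19, 23, 20, 4, 22,
   7, 1, 25, 2, 8, 24, 11, 5, 27, 6, 12, 26, 15, 9, 16, 10, 18, 28, 13, 21, 14, 0, 29, 3, 17, 23,
   19, 4, 20, 7, 22, 25, 1, 8, 2, 11, 24, 27, 5, 12, 6, 15, 26, 16, 9, 18, 10, 28, 21, 13, 0, 14,
   3, 29, 23, 17, 4, 19, 7, 20, 25, 22, 8, 1, 11, 2, 27, 24, 12, 5, 15, 6, 16, 26, 18, 9, 10, 21,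
   28, 0, 13, 3, 14, 23, 29, 4, 17, 7, 19, 25, 20, 8, 22, 11, 1, 27, 2, 12, 24, 15, 5, 16, 6, 18,
   26, 9, 21, 10, 0, 28, 3, 13, 23, 14, 4, 29, 7, 17, 25, 19, 8, 20, 11, 22, 27, 1, 12, 2, 15,
   24, 16, 5, 18, 6, 26, 21, 9, 0, 10, 3, 28, 23, 13, 4, 14, 7, 29, 25, 17, 8, 19, 11, 20, 27,
   22, 12, 1, 15, 2, 16, 24, 18, 5, 6, 21, 26, 0, 9, 3, 10, 23, 28, 4, 13, 7, 14, 25, 29, 8, 17,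
   11, 19, 27, 20, 12, 22, 15, 1, 16, 2, 18, 24, 5, 21, 6, 0, 26, 3, 9, 23, 10, 4, 28, 7, 13, 25,
   14, 8, 29, 11, 17, 27, 19, 12, 20, 15, 22, 16, 1, 18, 2, 24, 21, 5, 0, 6, 3, 26, 23, 9, 4, 10,
   7, 28, 25, 13, 8, 14, 11, 29, 27, 17, 12, 19, 15, 20, 16, 22, 18, 1, 2, 21, 24, 0, 5, 3, 6,
   23, 26, 4, 9, 7, 10, 25, 28, 8, 13, 11, 14, 27, 29, 12, 17, 15, 19, 16, 20, 18, 22, 1, 21, 2,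
   0, 24, 3, 5, 23, 6, 4, 26, 7, 9, 25, 10, 8, 28, 11, 13, 27, 14, 12, 29, 15, 17, 16, 19, 18,
   20, 22, 21, 1, 0, 2, 3, 24, 23, 5, 4, 6, 7, 26, 25, 9, 8, 10, 11, 28, 27, 13, 12, 14, 15, 29,
   16, 17, 18, 19, 20, 21, 22, 1, 2, 0, 3, 23, 24]

/-- The final parts of the four blocks for `n = 30`. -/
def tails30 : List (List ℕ) :=
  [[4, 5, 7, 6, 25, 26, 9, 10, 8, 11, 27, 28, 12, 13, 15, 14],
   [5, 6, 4, 7, 25, 26, 9, 10, 8, 11, 27, 28, 12, 13, 15, 14],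
   [4, 5, 7, 6, 25, 26, 9, 10, 8, 11, 27, 28, 13, 14, 12, 15],
   [5, 6, 4, 7, 25, 26, 8, 9, 11, 10, 27, 28, 13, 14, 12, 15]]

/-- Common part of the blocks for `n = 31`. -/
def base31 : List ℕ :=
 [16, 30, 18, 17, 20, 19, 22, 21, 0, 23, 3, 1, 24, 2, 4, 25, 7, 5, 26, 6, 8, 27, 11, 9, 28, 10,
   12, 29, 15, 13, 16, 14, 18, 30, 20, 17, 22, 19, 0, 21, 3, 23, 24, 1, 4, 2, 7, 25, 26, 5, 8, 6,
   11, 27, 28, 9, 12, 10, 15, 29, 16, 13, 18, 14, 20, 30, 22, 17, 0, 19, 3, 21, 24, 23, 4, 1, 7,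
   2, 26, 25, 8, 5, 11, 6, 28, 27, 12, 9, 15, 10, 16, 29, 18, 13, 20, 14, 22, 30, 0, 17, 3, 19,
   24, 21, 4, 23, 7, 1, 26, 2, 8, 25, 11, 5, 28, 6, 12, 27, 15, 9, 16, 10, 18, 29, 20, 13, 22,
   14, 0, 30, 3, 17, 24, 19, 4, 21, 7, 23, 26, 1, 8, 2, 11, 25, 28, 5, 12, 6, 15, 27, 16, 9, 18,
   10, 20, 29, 22, 13, 0, 14, 3, 30, 24, 17, 4, 19, 7, 21, 26, 23, 8, 1, 11, 2, 28, 25, 12, 5,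
   15, 6, 16, 27, 18, 9, 20, 10, 22, 29, 0, 13, 3, 14, 24, 30, 4, 17, 7, 19, 26, 21, 8, 23, 11,
   1, 28, 2, 12, 25, 15, 5, 16, 6, 18, 27, 20, 9, 22, 10, 0, 29, 3, 13, 24, 14, 4, 30, 7, 17, 26,
   19, 8, 21, 11, 23, 28, 1, 12, 2, 15, 25, 16, 5, 18, 6, 20, 27, 22, 9, 0, 10, 3, 29, 24, 13, 4,
   14, 7, 30, 26, 17, 8, 19, 11, 21, 28, 23, 12, 1, 15, 2, 16, 25, 18, 5, 20, 6, 22, 27, 0, 9, 3,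
   10, 24, 29, 4, 13, 7, 14, 26, 30, 8, 17, 11, 19, 28, 21, 12, 23, 15, 1, 16, 2, 18, 25, 20, 5,
   22, 6, 0, 27, 3, 9, 24, 10, 4, 29, 7, 13, 26, 14, 8, 30, 11, 17, 28, 19, 12, 21, 15, 23, 16,
   1, 18, 2, 20, 25, 22, 5, 0, 6, 3, 27, 24, 9, 4, 10, 7, 29, 26, 13, 8, 14, 11, 30, 28, 17, 12,
   19, 15, 21, 16, 23, 18, 1, 20, 2, 22, 25, 0, 5, 3, 6, 24, 27, 4, 9, 7, 10, 26, 29, 8, 13, 11,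
   14, 28, 30, 12, 17, 15, 19, 16, 21, 18, 23, 20, 1, 22, 2, 0, 25, 3, 5, 24, 6, 4, 27, 7, 9, 26,
   10, 8, 29, 11, 13, 28, 14, 12, 30, 15, 17, 16, 19, 18, 21, 20, 23, 22, 1, 0, 2, 3, 25, 24, 5,
   4, 6, 7, 27, 26, 9, 8, 10, 11, 29, 28, 13, 12, 14, 15, 30, 16, 17, 18, 19, 20, 21, 22, 23, 1,
   2, 0, 3, 24, 25]

/-- The final parts of the four blocks for `n = 31`. -/
def tails31 : List (List ℕ) :=
  [[4, 5, 7, 6, 26, 27, 9, 10, 8, 11, 28, 29, 12, 13, 15, 14],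
   [5, 6, 4, 7, 26, 27, 9, 10, 8, 11, 28, 29, 12, 13, 15, 14],
   [4, 5, 7, 6, 26, 27, 9, 10, 8, 11, 28, 29, 13, 14, 12, 15],
   [5, 6, 4, 7, 26, 27, 8, 9, 11, 10, 28, 29, 13, 14, 12, 15]]

/-- Common part of the blocks for `n = 32`. -/
def base32 : List ℕ :=
 [16, 31, 18, 17, 20, 19, 21, 23, 22, 0, 24, 3, 1, 25, 2, 4, 26, 7, 5, 27, 6, 8, 28, 11, 9, 29,
   10, 12, 30, 15, 13, 16, 14, 18, 31, 20, 17, 19, 23, 21, 0, 22, 3, 24, 25, 1, 4, 2, 7, 26, 27,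
   5, 8, 6, 11, 28, 29, 9, 12, 10, 15, 30, 16, 13, 18, 14, 20, 31, 17, 23, 19, 0, 21, 3, 22, 25,
   24, 4, 1, 7, 2, 27, 26, 8, 5, 11, 6, 29, 28, 12, 9, 15, 10, 16, 30, 18, 13, 20, 14, 31, 23,
   17, 0, 19, 3, 21, 25, 22, 4, 24, 7, 1, 27, 2, 8, 26, 11, 5, 29, 6, 12, 28, 15, 9, 16, 10, 18,
   30, 20, 13, 14, 23, 31, 0, 17, 3, 19, 25, 21, 4, 22, 7, 24, 27, 1, 8, 2, 11, 26, 29, 5, 12, 6,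
   15, 28, 16, 9, 18, 10, 20, 30, 13, 23, 14, 0, 31, 3, 17, 25, 19, 4, 21, 7, 22, 27, 24, 8, 1,
   11, 2, 29, 26, 12, 5, 15, 6, 16, 28, 18, 9, 20, 10, 30, 23, 13, 0, 14, 3, 31, 25, 17, 4, 19,
   7, 21, 27, 22, 8, 24, 11, 1, 29, 2, 12, 26, 15, 5, 16, 6, 18, 28, 20, 9, 10, 23, 30, 0, 13, 3,
   14, 25, 31, 4, 17, 7, 19, 27, 21, 8, 22, 11, 24, 29, 1, 12, 2, 15, 26, 16, 5, 18, 6, 20, 28,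
   9, 23, 10, 0, 30, 3, 13, 25, 14, 4, 31, 7, 17, 27, 19, 8, 21, 11, 22, 29, 24, 12, 1, 15, 2,
   16, 26, 18, 5, 20, 6, 28, 23, 9, 0, 10, 3, 30, 25, 13, 4, 14, 7, 31, 27, 17, 8, 19, 11, 21,
   29, 22, 12, 24, 15, 1, 16, 2, 18, 26, 20, 5, 6, 23, 28, 0, 9, 3, 10, 25, 30, 4, 13, 7, 14, 27,
   31, 8, 17, 11, 19, 29, 21, 12, 22, 15, 24, 16, 1, 18, 2, 20, 26, 5, 23, 6, 0, 28, 3, 9, 25,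
   10, 4, 30, 7, 13, 27, 14, 8, 31, 11, 17, 29, 19, 12, 21, 15, 22, 16, 24, 18, 1, 20, 2, 26, 23,
   5, 0, 6, 3, 28, 25, 9, 4, 10, 7, 30, 27, 13, 8, 14, 11, 31, 29, 17, 12, 19, 15, 21, 16, 22,
   18, 24, 20, 1, 2, 23, 26, 0, 5, 3, 6, 25, 28, 4, 9, 7, 10, 27, 30, 8, 13, 11, 14, 29, 31, 12,
   17, 15, 19, 16, 21, 18, 22, 20, 24, 1, 23, 2, 0, 26, 3, 5, 25, 6, 4, 28, 7, 9, 27, 10, 8, 30,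
   11, 13, 29, 14, 12, 31, 15, 17, 16, 19, 18, 21, 20, 22, 24, 23, 1, 0, 2, 3, 26, 25, 5, 4, 6,
   7, 28, 27, 9, 8, 10, 11, 30, 29, 13, 12, 14, 15, 31, 16, 17, 18, 19, 20, 21, 22, 23, 24, 1, 2,
   0, 3, 25, 26]

/-- The final parts of the four blocks for `n = 32`. -/
def tails32 : List (List ℕ) :=
  [[4, 5, 7, 6, 27, 28, 9, 10, 8, 11, 29, 30, 12, 13, 15, 14],
   [5, 6, 4, 7, 27, 28, 9, 10, 8, 11, 29, 30, 12, 13, 15, 14],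
   [4, 5, 7, 6, 27, 28, 9, 10, 8, 11, 29, 30, 13, 14, 12, 15],
   [5, 6, 4, 7, 27, 28, 8, 9, 11, 10, 29, 30, 13, 14, 12, 15]]

def tab30 : Tab := ⟨30, 464, 16, base30, tails30⟩

theorem win30 : allL sixes (winOK tab30) = true := by decide +kernel

theorem skel30 : skelOK tab30 = true := by decide +kernel

theorem gap30 : (allLt 4 fun s => gapOK s base30 29) = true := by decide +kernel

theorem letters30 : lettersOK tab30 = true := by decide +kernel

def tab31 : Tab := ⟨31, 480, 16, base31, tails31⟩

theorem win31 : allL sixes (winOK tab31) = true := by decide +kernel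

theorem skel31 : skelOK tab31 = true := by decide +kernel

theorem gap31 : (allLt 4 fun s => gapOK s base31 29) = true := by decide +kernel

theorem letters31 : lettersOK tab31 = true := by decide +kernel

def tab32 : Tab := ⟨32, 527, 17, base32, tails32⟩

theorem win32 : allL sixes (winOK tab32) = true := by decide +kernel

theorem skel32 : skelOK tab32 = true := by decide +kernel

theorem gap32 : (allLt 4 fun s => gapOK s base32 29) = true := by decide +kernel

theorem letters32 : lettersOK tab32 = true := by decide +kernel


/-! ### Correctness of the bit-plane machinery -/

theorem plane_cons (b y : ℕ) (l : List ℕ) :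
    plane b (y :: l) = (y >>> b) % 2 + 2 * plane b l := rfl

theorem testBit_plane (b : ℕ) (l : List ℕ) (i : ℕ) :
    (plane b l).testBit i = (l.getD i 0).testBit b := by
  induction l generalizing i with
  | nil => simp [plane]
  | cons y l ih =>
    rw [plane_cons]
    have h2 : (y >>> b) % 2 < 2 := Nat.mod_lt _ (by norm_num)
    cases i with
    | zero =>
      rw [Nat.testBit_zero, List.getD_cons_zero, Nat.testBit_eq_decide_div_mod_eq,
        ← Nat.shiftRight_eq_div_pow]
      congr 1
      simp
    | succ i =>
      rw [Nat.testBit_succ, List.getD_cons_succ, ← ih]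
      congr 1
      omega

theorem diff_cons (PQ : ℕ × ℕ) (PL : List (ℕ × ℕ)) (p : ℕ) :
    diff (PQ :: PL) p = (PQ.1 ^^^ (PQ.2 >>> p)) ||| diff PL p := rfl

theorem testBit_diff (PL : List (ℕ × ℕ)) (p i : ℕ) (h : (diff PL p).testBit i = true) :
    ∃ PQ ∈ PL, PQ.1.testBit i ≠ PQ.2.testBit (i + p) := by
  induction PL with
  | nil => simp [diff] at h
  | cons PQ PL ih =>
    rw [diff_cons, Nat.testBit_or, Bool.or_eq_true] at h
    rcases h with h | h
    · refine ⟨PQ, by simp, ?_⟩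
      rw [Nat.testBit_xor, Nat.testBit_shiftRight, Nat.add_comm p i] at h
      intro heq
      rw [heq] at h
      simp at h
    · obtain ⟨X, hX, h⟩ := ih h
      exact ⟨X, by simp [hX], h⟩

theorem land_cover {A M i : ℕ} (h : Nat.beq (Nat.land A M) M = true) (hi : M.testBit i = true) :
    A.testBit i = true := by
  have h : A &&& M = M := Nat.eq_of_beq_eq_true h
  have := congrArg (fun z => z.testBit i) h
  simp only [Nat.testBit_and, hi, Bool.and_true] at this
  exact this

theorem cover_succ (M k A : ℕ) : cover M (k + 1) A =
    cond (Nat.beq (Nat.land A M) M) true (cover M k (A ||| (A >>> 1))) := rfl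

theorem cover_spec (M k A i : ℕ) (h : cover M k A = true) (hi : M.testBit i = true) :
    ∃ t ≤ k, A.testBit (i + t) = true := by
  induction k generalizing A with
  | zero => exact ⟨0, le_refl _, land_cover h hi⟩
  | succ k ih =>
    rw [cover_succ] at h
    rcases hb : Nat.beq (Nat.land A M) M with _ | _
    · rw [hb, cond_false] at h
      obtain ⟨t, ht, hA⟩ := ih _ h
      rw [Nat.testBit_or, Nat.testBit_shiftRight, Bool.or_eq_true] at hA
      rcases hA with hA | hA
      · exact ⟨t, by omega, hA⟩
      · exact ⟨t + 1, by omega, by rw [← hA]; congr 1; omega⟩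
    · exact ⟨0, by omega, land_cover hb hi⟩

theorem chk_spec (PL : List (ℕ × ℕ)) (p k len i : ℕ) (h : chk PL p k len = true)
    (hk : 1 ≤ k) (hi : i + p + k ≤ len) :
    ∃ t < k, ∃ PQ ∈ PL, PQ.1.testBit (i + t) ≠ PQ.2.testBit (i + t + p) := by
  obtain ⟨t, ht, h⟩ := cover_spec _ _ _ i h (by
    show (2 ^ (len + 1 - (p + k)) - 1).testBit i = true
    rw [Nat.testBit_two_pow_sub_one]
    simp only [decide_eq_true_eq]
    omega)
  change t ≤ k - 1 at ht
  exact ⟨t, by omega, testBit_diff _ _ _ h⟩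

theorem allLt_spec (m : ℕ) (f : ℕ → Bool) (h : allLt m f = true) (i : ℕ) (hi : i < m) :
    f i = true := by
  induction m with
  | zero => omega
  | succ m ih =>
    have h : cond (f m) (allLt m f) false = true := h
    rcases hf : f m with _ | _
    · rw [hf] at h; simp at h
    · rw [hf, cond_true] at h
      by_cases him : i = m
      · rw [him, hf]
      · exact ih h (by omega)

theorem allL_spec {α : Type} (l : List α) (f : α → Bool) (h : allL l f = true) (i : α)
    (hi : i ∈ l) : f i = true := by
  induction l with
  | nil => simp at hi
  | cons y l ih =>
    have h : cond (f y) (allL l f) false = true := h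
    rcases hf : f y with _ | _
    · rw [hf] at h; simp at h
    · rw [hf, cond_true] at h
      rcases List.mem_cons.1 hi with rfl | hi
      · exact hf
      · exact ih h hi

theorem chk_planes (nb : ℕ) (l l' : List ℕ) (p k len i : ℕ)
    (h : chk (planes nb l l') p k len = true) (hk : 1 ≤ k) (hi : i + p + k ≤ len) :
    ∃ t < k, l.getD (i + t) 0 ≠ l'.getD (i + t + p) 0 := by
  obtain ⟨t, ht, PQ, hPQ, hne⟩ := chk_spec _ _ _ _ _ h hk hi
  refine ⟨t, ht, fun heq => hne ?_⟩
  simp only [planes, List.mem_map] at hPQ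
  obtain ⟨b, -, rfl⟩ := hPQ
  simp only [testBit_plane]
  rw [heq]

/-! ### The outer word -/

/-- The outer word, with letters `0, 1, 2, 3`. -/
def wo (i : ℕ) : ℕ := if i = 0 then 0 else st (wo (i / 3)) (i % 3)
termination_by i
decreasing_by omega

theorem wo_step (i r : ℕ) (hr : r < 3) : wo (3 * i + r) = st (wo i) r := by
  by_cases h : 3 * i + r = 0
  · have hi : i = 0 := by omega
    have hr : r = 0 := by omega
    subst hi hr
    rw [wo]
    simp [st]
  · rw [wo, if_neg h]
    congr 2 <;> omega

theorem pairs_closed : ∀ pr ∈ pairs, (st pr.1 0, st pr.1 1) ∈ pairs ∧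
    (st pr.1 1, st pr.1 2) ∈ pairs ∧ (st pr.1 2, st pr.2 0) ∈ pairs := by decide +kernel

theorem wo_pair (i : ℕ) : (wo i, wo (i + 1)) ∈ pairs := by
  induction i using Nat.strong_induction_on with
  | _ i ih =>
    have h3 : i % 3 < 3 := Nat.mod_lt _ (by norm_num)
    obtain ⟨u, r, hr, rfl⟩ : ∃ u r, r < 3 ∧ i = 3 * u + r := ⟨i / 3, i % 3, h3, by omega⟩
    by_cases h : 3 * u + r = 0
    · have hu : u = 0 := by omega
      have hr : r = 0 := by omega
      subst hu hr
      have h0 : wo 0 = 0 := by rw [wo]; simp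
      have h1 : wo 1 = st (wo 0) 1 := wo_step 0 1 (by norm_num)
      show (wo 0, wo 1) ∈ pairs
      rw [h1, h0]
      decide
    · have := pairs_closed _ (ih u (by omega))
      simp only at this
      obtain ⟨p0, p1, p2⟩ := this
      interval_cases r
      · rw [show 3 * u + 0 + 1 = 3 * u + 1 from rfl, wo_step _ _ hr, wo_step _ 1 (by norm_num)]
        exact p0
      · rw [show 3 * u + 1 + 1 = 3 * u + 2 from rfl, wo_step _ _ hr, wo_step _ 2 (by norm_num)]
        exact p1
      · rw [show 3 * u + 2 + 1 = 3 * (u + 1) + 0 by ring, wo_step _ _ hr,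
          wo_step _ 0 (by norm_num)]
        exact p2

theorem wo_lt (i : ℕ) : wo i < 4 := by
  have h : ∀ pr ∈ pairs, pr.1 < 4 := by decide +kernel
  exact h _ (wo_pair i)

theorem fkl_succ (k a : ℕ) :
    fkl (k + 1) a = fkl k (st a 0) ++ (fkl k (st a 1) ++ fkl k (st a 2)) := rfl

theorem fkl_length (k a : ℕ) : (fkl k a).length = 3 ^ k := by
  induction k generalizing a with
  | zero => rfl
  | succ k ih =>
    rw [fkl_succ, List.length_append, List.length_append, ih, ih, ih, pow_succ]
    ring

theorem getD_append (l l' : List ℕ) (m : ℕ) (hm : l.length = m) (r : ℕ) :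
    (l ++ l').getD r 0 = if r < m then l.getD r 0 else l'.getD (r - m) 0 := by
  subst hm
  split_ifs with h
  · exact List.getD_append _ _ _ _ h
  · exact List.getD_append_right _ _ _ _ (by omega)

theorem fkl_spec (k i r : ℕ) (hr : r < 3 ^ k) :
    (fkl k (wo i)).getD r 0 = wo (3 ^ k * i + r) := by
  induction k generalizing i r with
  | zero =>
    have : r = 0 := by simpa using hr
    subst this
    simp [fkl]
  | succ k ih =>
    rw [fkl_succ, getD_append _ _ _ (fkl_length _ _), getD_append _ _ _ (fkl_length _ _)]
    rw [pow_succ] at hr ⊢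
    split_ifs with h1 h2
    · rw [← wo_step i 0 (by norm_num), ih _ _ h1]; congr 1; ring
    · rw [← wo_step i 1 (by norm_num), ih _ _ h2]; congr 1
      zify [not_lt.1 h1]; ring
    · rw [← wo_step i 2 (by norm_num), ih _ _ (by omega)]; congr 1
      rw [Nat.sub_sub]
      zify [show 3 ^ k + 3 ^ k ≤ r by omega]; ring

theorem fkl_window (k i r : ℕ) (hr : r < 2 * 3 ^ k) :
    (fkl k (wo i) ++ fkl k (wo (i + 1))).getD r 0 = wo (3 ^ k * i + r) := by
  rw [getD_append _ _ _ (fkl_length _ _)]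
  split_ifs with h
  · exact fkl_spec _ _ _ h
  · rw [fkl_spec _ _ _ (by omega)]
    congr 1
    zify [not_lt.1 h]; ring

/-- Number of occurrences of the letter `a` among the first `j` letters of the outer word. -/
def cnt (a : ℕ) : ℕ → ℕ
  | 0 => 0
  | j + 1 => cnt a j + ind (wo j) a

theorem cnt_mono (a i u : ℕ) : cnt a i ≤ cnt a (i + u) := by
  induction u with
  | zero => exact le_refl _
  | succ u ih => exact ih.trans (Nat.le_add_right _ _)

theorem sts_cons (a : ℕ) (l : List ℕ) (c0 c1 c2 c3 : ℕ) :
    sts (a :: l) c0 c1 c2 c3 = enc c0 c1 c2 c3 ::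
      sts l (c0 + ind a 0) (c1 + ind a 1) (c2 + ind a 2) (c3 + ind a 3) := rfl

theorem sts_spec (l : List ℕ) (s c0 c1 c2 c3 : ℕ)
    (hl : ∀ u < l.length, l.getD u 0 = wo (s + u)) (u : ℕ) (hu : u ≤ l.length) :
    (sts l c0 c1 c2 c3).getD u 0 =
      enc (c0 + cnt 0 (s + u) - cnt 0 s) (c1 + cnt 1 (s + u) - cnt 1 s)
        (c2 + cnt 2 (s + u) - cnt 2 s) (c3 + cnt 3 (s + u) - cnt 3 s) := by
  induction l generalizing s c0 c1 c2 c3 u with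
  | nil =>
    have : u = 0 := by simpa using hu
    subst this
    simp [sts]
  | cons a l ih =>
    rw [sts_cons]
    cases u with
    | zero => simp
    | succ u =>
      have ha : a = wo s := by simpa using hl 0 (by simp)
      rw [List.getD_cons_succ, ih (s + 1) _ _ _ _ (fun v hv => by
        have := hl (v + 1) (by simpa using hv)
        rw [List.getD_cons_succ] at this
        rw [this]; congr 1; omega) u (by simpa using hu), show s + (u + 1) = s + 1 + u by omega]
      simp only [cnt, ha]
      congr 1 <;> omega

/-- The letter counts at `j` and `j + q` agree modulo `4`. -/
def Eqv (q j : ℕ) : Prop := cnt 0 j % 4 = cnt 0 (j + q) % 4 ∧ cnt 1 j % 4 = cnt 1 (j + q) % 4 ∧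
  cnt 2 j % 4 = cnt 2 (j + q) % 4 ∧ cnt 3 j % 4 = cnt 3 (j + q) % 4

theorem outk_bounds (q : ℕ) (hq : q ≤ 612) : 1 ≤ q → 1 ≤ outk q ∧ outk q ≤ 30 := by
  intro h
  unfold outk
  rcases hb : Nat.ble q 204 with _ | _
  · have : ¬ q ≤ 204 := fun h => by rw [Nat.ble_eq_true_of_le h] at hb; cases hb
    simp only [cond_false]; omega
  · have : q ≤ 204 := Nat.le_of_ble_eq_true hb
    simp only [cond_true]; omega

theorem out_small (q s : ℕ) (hq : 1 ≤ q) (hq' : q ≤ 612) : ∃ t < outk q, ¬ Eqv q (s + t) := by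
  obtain ⟨hk1, hk2⟩ := outk_bounds q hq' hq
  have h := allL_spec _ _ out_check _ (wo_pair (s / 729))
  have h := allLt_spec _ _ h (q - 1) (by omega)
  simp only [Nat.sub_add_cancel hq] at h
  obtain ⟨t, ht, hne⟩ := chk_planes _ _ _ _ _ _ (s % 729) h hk1 (by omega)
  refine ⟨t, ht, fun hE => hne ?_⟩
  have hlen : (fkl 6 (wo (s / 729)) ++ fkl 6 (wo (s / 729 + 1))).length = 1458 := by
    rw [List.length_append, fkl_length, fkl_length]
    norm_num
  have hw : ∀ u < (fkl 6 (wo (s / 729)) ++ fkl 6 (wo (s / 729 + 1))).length,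
      (fkl 6 (wo (s / 729)) ++ fkl 6 (wo (s / 729 + 1))).getD u 0 = wo (729 * (s / 729) + u) := by
    intro u hu
    rw [hlen] at hu
    exact fkl_window 6 _ _ (by omega)
  rw [sts_spec _ _ 0 0 0 0 hw _ (by omega), sts_spec _ _ 0 0 0 0 hw _ (by omega)]
  have e1 : 729 * (s / 729) + (s % 729 + t) = s + t := by omega
  have e2 : 729 * (s / 729) + (s % 729 + t + q) = s + t + q := by omega
  rw [e1, e2]
  have m : ∀ a, cnt a (729 * (s / 729)) ≤ cnt a (s + t) ∧ cnt a (s + t) ≤ cnt a (s + t + q) := by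
    intro a
    refine ⟨?_, cnt_mono _ _ _⟩
    rw [← e1]
    exact cnt_mono _ _ _
  obtain ⟨h0, h1, h2, h3⟩ := hE
  have m0 := m 0
  have m1 := m 1
  have m2 := m 2
  have m3 := m 3
  unfold enc
  omega

theorem ind_eq (a b : ℕ) : ind a b = if a = b then 1 else 0 := by
  unfold ind
  split_ifs with h
  · subst h; simp
  · rcases hb : Nat.beq a b with _ | _
    · rfl
    · exact absurd (Nat.eq_of_beq_eq_true hb) h

theorem Eqv_letter (q j : ℕ) (h : Eqv q j) (h' : Eqv q (j + 1)) : wo j = wo (j + q) := by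
  obtain ⟨h0, h1, h2, h3⟩ := h
  obtain ⟨k0, k1, k2, k3⟩ := h'
  rw [show j + 1 + q = j + q + 1 by omega] at k0 k1 k2 k3
  simp only [cnt, ind_eq] at k0 k1 k2 k3
  have a1 := wo_lt j
  have a2 := wo_lt (j + q)
  generalize wo j = x at *
  generalize wo (j + q) = y at *
  split_ifs at k0 <;> split_ifs at k1 <;> split_ifs at k2 <;> split_ifs at k3 <;> omega

theorem cnt_triple (u : ℕ) :
    cnt 0 (3 * u) = 2 * cnt 0 u + cnt 1 u + 2 * cnt 2 u + cnt 3 u ∧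
    cnt 1 (3 * u) = cnt 0 u + cnt 1 u + cnt 3 u ∧
    cnt 2 (3 * u) = cnt 1 u ∧ cnt 3 (3 * u) = cnt 2 u + cnt 3 u := by
  induction u with
  | zero => simp [cnt]
  | succ u ih =>
    obtain ⟨i0, i1, i2, i3⟩ := ih
    rw [show 3 * (u + 1) = 3 * u + 0 + 1 + 1 + 1 by ring]
    simp only [cnt]
    have w0 : wo (3 * u) = st (wo u) 0 := wo_step u 0 (by norm_num)
    have w1 : wo (3 * u + 1) = st (wo u) 1 := wo_step u 1 (by norm_num)
    have w2 : wo (3 * u + 1 + 1) = st (wo u) 2 := wo_step u 2 (by norm_num)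
    simp only [w0, w1, w2, i0, i1, i2, i3, ind_eq]
    have a1 := wo_lt u
    generalize wo u = x at *
    interval_cases x <;> simp [st] <;> omega

theorem Eqv_descend (q u : ℕ) (h : Eqv (3 * q) (3 * u)) : Eqv q u := by
  unfold Eqv at *
  rw [show 3 * u + 3 * q = 3 * (u + q) by ring] at h
  obtain ⟨i0, i1, i2, i3⟩ := cnt_triple u
  obtain ⟨j0, j1, j2, j3⟩ := cnt_triple (u + q)
  omega

theorem st_facts (a b : ℕ) (ha : a < 4) (hb : b < 4) : st a 0 ≠ st b 1 := by
  interval_cases a <;> interval_cases b <;> decide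

theorem wo_sync (q s : ℕ) (h : ∀ t < 3, wo (s + t) = wo (s + t + q)) : q % 3 = 0 := by
  by_contra hq
  have h12 : q % 3 = 1 ∨ q % 3 = 2 := by omega
  rcases h12 with h1 | h1
  · obtain ⟨t, ht, u, hu⟩ : ∃ t < 3, ∃ u, s + t = 3 * u + 0 :=
      ⟨(3 - s % 3) % 3, by omega, (s + (3 - s % 3) % 3) / 3, by omega⟩
    have := h t ht
    rw [hu, show 3 * u + 0 + q = 3 * (u + q / 3) + 1 by omega, wo_step _ _ (by norm_num),
      wo_step _ _ (by norm_num)] at this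
    exact st_facts _ _ (wo_lt _) (wo_lt _) this
  · obtain ⟨t, ht, u, hu⟩ : ∃ t < 3, ∃ u, s + t = 3 * u + 1 :=
      ⟨(4 - s % 3) % 3, by omega, (s + (4 - s % 3) % 3) / 3, by omega⟩
    have := h t ht
    rw [hu, show 3 * u + 1 + q = 3 * (u + q / 3 + 1) + 0 by omega, wo_step _ _ (by norm_num),
      wo_step _ _ (by norm_num)] at this
    exact st_facts _ _ (wo_lt _) (wo_lt _) this.symm

/-- The outer word contains only short kernel repetitions. -/
theorem outer (q : ℕ) (hq : 1 ≤ q) (s N : ℕ) (h : ∀ t < N, Eqv q (s + t)) (hN : 1 ≤ N) :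
    31 * N + 6 ≤ q ∧ (204 < q → 31 * (N + 1) ≤ q) := by
  induction q using Nat.strong_induction_on generalizing s N with
  | _ q ih =>
    by_cases hq' : q ≤ 612
    · obtain ⟨t, ht, hE⟩ := out_small q s hq hq'
      have hN' : N ≤ t := by
        by_contra hc
        exact hE (h t (by omega))
      unfold outk at ht
      rcases hb : Nat.ble q 204 with _ | _
      · have : ¬ q ≤ 204 := fun h => by rw [Nat.ble_eq_true_of_le h] at hb; cases hb
        simp only [hb, cond_false] at ht; omega
      · have : q ≤ 204 := Nat.le_of_ble_eq_true hb
        simp only [hb, cond_true] at ht; omega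
    · suffices 31 * (N + 1) ≤ q by omega
      by_cases hN4 : N ≤ 3
      · omega
      have h3 : q % 3 = 0 := wo_sync q s (fun t ht =>
        Eqv_letter q (s + t) (h t (by omega)) (h (t + 1) (by omega)))
      obtain ⟨q', rfl⟩ : ∃ q', q = 3 * q' := ⟨q / 3, by omega⟩
      have := ih q' (by omega) (by omega) ((s + 2) / 3) ((s + N - 1) / 3 + 1 - (s + 2) / 3) (by
        intro t ht
        apply Eqv_descend
        have := h (3 * ((s + 2) / 3 + t) - s) (by omega)
        rwa [show s + (3 * ((s + 2) / 3 + t) - s) = 3 * ((s + 2) / 3 + t) by omega] at this)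
        (by omega)
      have := this.2 (by omega)
      omega


/-! ### The inner action -/

theorem cond_ble {α : Type} (a b : ℕ) (u v : α) :
    cond (Nat.ble a b) u v = if a ≤ b then u else v := by
  split_ifs with h
  · rw [Nat.ble_eq_true_of_le h, cond_true]
  · rcases hb : Nat.ble a b with _ | _
    · rfl
    · exact absurd (Nat.le_of_ble_eq_true hb) h

theorem act_eq (v0 v1 v2 v3 y : ℕ) : act v0 v1 v2 v3 y =
    if 16 ≤ y then y else if 8 ≤ y then (if 12 ≤ y then 12 + (y + v3) % 4 else 8 + (y + v2) % 4)
      else if 4 ≤ y then 4 + (y + v1) % 4 else (y + v0) % 4 := by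
  simp only [act, cond_ble]

theorem cls_eq (y : ℕ) : cls y = if 16 ≤ y then y else y / 4 := by
  simp only [cls, cond_ble]

theorem act_inj (v0 v1 v2 v3 y z : ℕ) (h : act v0 v1 v2 v3 y = act v0 v1 v2 v3 z) : y = z := by
  simp only [act_eq] at h
  split_ifs at h <;> omega

theorem act_act (v0 v1 v2 v3 u0 u1 u2 u3 y : ℕ) : act v0 v1 v2 v3 (act u0 u1 u2 u3 y) =
    act (v0 + u0) (v1 + u1) (v2 + u2) (v3 + u3) y := by
  rw [act_eq u0, act_eq (v0 + u0)]
  split_ifs <;> rw [act_eq] <;> split_ifs <;> omega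

theorem cls_act (v0 v1 v2 v3 y : ℕ) : cls (act v0 v1 v2 v3 y) = cls y := by
  rw [act_eq, cls_eq y]
  split_ifs <;> rw [cls_eq] <;> split_ifs <;> omega

theorem act_lt (v0 v1 v2 v3 y n : ℕ) (hn : 16 ≤ n) (hy : y < n) : act v0 v1 v2 v3 y < n := by
  rw [act_eq]
  split_ifs <;> omega

theorem act_cls (v0 v1 v2 v3 u0 u1 u2 u3 y : ℕ) (h : act v0 v1 v2 v3 y = act u0 u1 u2 u3 y) :
    (cls y = 0 → v0 % 4 = u0 % 4) ∧ (cls y = 1 → v1 % 4 = u1 % 4) ∧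
    (cls y = 2 → v2 % 4 = u2 % 4) ∧ (cls y = 3 → v3 % 4 = u3 % 4) := by
  rw [cls_eq]
  simp only [act_eq] at h
  split_ifs at * <;> omega

/-! ### The infinite word -/

/-- Accumulated exponent of the `s`-th cycle before block `j`. -/
def V (s : ℕ) : ℕ → ℕ
  | 0 => 0
  | j + 1 => V s j + et (wo j) s

theorem V_cnt (j : ℕ) : V 0 j = cnt 0 j + cnt 1 j + cnt 2 j + cnt 3 j ∧
    V 1 j = cnt 1 j + cnt 3 j ∧ V 2 j = cnt 0 j + cnt 1 j + cnt 2 j ∧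
    V 3 j = cnt 2 j + cnt 3 j := by
  induction j with
  | zero => simp [V, cnt]
  | succ j ih =>
    obtain ⟨i0, i1, i2, i3⟩ := ih
    simp only [V, cnt, i0, i1, i2, i3, ind_eq]
    have a1 := wo_lt j
    generalize wo j = x at *
    interval_cases x <;> simp [et] <;> omega

/-- The infinite word, with letters as natural numbers. -/
def xv (t : Tab) (i : ℕ) : ℕ :=
  act (V 0 (i / t.L)) (V 1 (i / t.L)) (V 2 (i / t.L)) (V 3 (i / t.L))
    ((t.T (wo (i / t.L))).getD (i % t.L) 0)

/-- All facts about the tables which are used. -/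
structure Good (t : Tab) : Prop where
  win : allL sixes (winOK t) = true
  skel : skelOK t = true
  gap : (allLt 4 fun s => gapOK s t.base 29) = true
  letters : lettersOK t = true
  len : t.base.length + 16 = t.L
  val : (t.n = 30 ∧ t.L = 464 ∧ t.R = 16) ∨ (t.n = 31 ∧ t.L = 480 ∧ t.R = 16) ∨
    (t.n = 32 ∧ t.L = 527 ∧ t.R = 17)

theorem Good.T_spec {t : Tab} (h : Good t) (a : ℕ) (ha : a < 4) :
    (t.T a).length = t.L ∧ ∀ y ∈ t.T a, y < t.n := by
  have := allLt_spec _ _ h.letters a ha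
  rcases hb : Nat.beq (t.T a).length t.L with _ | _
  · simp only [hb, cond_false] at this
    cases this
  · simp only [hb, cond_true] at this
    refine ⟨Nat.eq_of_beq_eq_true hb, fun y hy => ?_⟩
    have := allL_spec _ _ this y hy
    exact Nat.le_of_ble_eq_true this

theorem Good.L_large {t : Tab} (h : Good t) : 464 ≤ t.L := by
  rcases h.val with h | h | h <;> omega

theorem Good.xv_at {t : Tab} (h : Good t) (j u : ℕ) (hu : u < t.L) :
    xv t (t.L * j + u) = act (V 0 j) (V 1 j) (V 2 j) (V 3 j) ((t.T (wo j)).getD u 0) := by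
  have hL := h.L_large
  have h1 : (t.L * j + u) / t.L = j := by
    rw [Nat.mul_add_div (by omega), Nat.div_eq_of_lt hu, Nat.add_zero]
  have h2 : (t.L * j + u) % t.L = u := by
    rw [Nat.mul_add_mod, Nat.mod_eq_of_lt hu]
  rw [xv, h1, h2]

theorem Good.xv_lt {t : Tab} (h : Good t) (i : ℕ) : xv t i < t.n := by
  have hn : 16 ≤ t.n := by rcases h.val with h | h | h <;> omega
  have hL := h.L_large
  obtain ⟨h1, h2⟩ := h.T_spec _ (wo_lt (i / t.L))
  apply act_lt _ _ _ _ _ _ hn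
  apply h2
  have : i % t.L < (t.T (wo (i / t.L))).length := by
    rw [h1]; exact Nat.mod_lt _ (by omega)
  rw [List.getD_eq_getElem _ _ this]
  exact List.getElem_mem _

/-! ### Windows -/

/-- The concatenation of blocks described by `as`. -/
def Wl (t : Tab) : List ℕ → ℕ → ℕ → ℕ → ℕ → List ℕ
  | [], _, _, _, _ => []
  | a :: as, v0, v1, v2, v3 => (t.T a).map (act v0 v1 v2 v3) ++
      Wl t as (v0 + et a 0) (v1 + et a 1) (v2 + et a 2) (v3 + et a 3)

theorem Pw_cons (t : Tab) (b a : ℕ) (as : List ℕ) (v0 v1 v2 v3 : ℕ) :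
    Pw t b (a :: as) v0 v1 v2 v3 = plane b ((t.T a).map (act v0 v1 v2 v3)) |||
      (Pw t b as (v0 + et a 0) (v1 + et a 1) (v2 + et a 2) (v3 + et a 3)) <<< t.L := rfl

theorem Good.testBit_Pw {t : Tab} (h : Good t) (b : ℕ) (as : List ℕ) (has : ∀ a ∈ as, a < 4)
    (v0 v1 v2 v3 u : ℕ) :
    (Pw t b as v0 v1 v2 v3).testBit u = ((Wl t as v0 v1 v2 v3).getD u 0).testBit b := by
  induction as generalizing v0 v1 v2 v3 u with
  | nil => simp [Pw, Wl]
  | cons a as ih =>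
    have hlen : ((t.T a).map (act v0 v1 v2 v3)).length = t.L := by
      rw [List.length_map]; exact (h.T_spec a (has a (by simp))).1
    rw [Pw_cons, Wl, Nat.testBit_or, testBit_plane, Nat.testBit_shiftLeft,
      ih (fun a ha => has a (by simp [ha])), getD_append _ _ _ hlen]
    split_ifs with hu
    · have : ¬ t.L ≤ u := by omega
      simp [this]
    · have h1 : t.L ≤ u := by omega
      rw [List.getD_eq_default _ _ (by omega)]
      simp [h1]

/-- `m` letters of the outer word from position `j`. -/
def wn (j : ℕ) : ℕ → List ℕ
  | 0 => []
  | m + 1 => wo j :: wn (j + 1) m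

theorem wn_lt (j m : ℕ) : ∀ a ∈ wn j m, a < 4 := by
  induction m generalizing j with
  | zero => simp [wn]
  | succ m ih =>
    intro a ha
    rcases List.mem_cons.1 ha with rfl | ha
    · exact wo_lt _
    · exact ih _ _ ha

theorem Good.Wl_spec {t : Tab} (h : Good t) (m j v0 v1 v2 v3 c0 c1 c2 c3 u : ℕ)
    (h0 : c0 + v0 = V 0 j) (h1 : c1 + v1 = V 1 j) (h2 : c2 + v2 = V 2 j) (h3 : c3 + v3 = V 3 j)
    (hu : u < m * t.L) :
    act c0 c1 c2 c3 ((Wl t (wn j m) v0 v1 v2 v3).getD u 0) = xv t (t.L * j + u) := by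
  induction m generalizing j v0 v1 v2 v3 u with
  | zero => omega
  | succ m ih =>
    have hl := (h.T_spec _ (wo_lt j)).1
    have hlen : ((t.T (wo j)).map (act v0 v1 v2 v3)).length = t.L := by
      rw [List.length_map]; exact hl
    rw [wn, Wl, getD_append _ _ _ hlen]
    split_ifs with hu1
    · rw [h.xv_at _ _ hu1, List.getD_eq_getElem _ _ (by omega), List.getElem_map, act_act,
        h0, h1, h2, h3, List.getD_eq_getElem]
    · rw [ih (j + 1) _ _ _ _ _ (by rw [V]; omega) (by rw [V]; omega) (by rw [V]; omega)
        (by rw [V]; omega) (by rw [Nat.succ_mul] at hu; omega)]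
      congr 1
      rw [Nat.mul_succ]
      omega

theorem sixes_check : ∀ pr ∈ pairs, ∀ r < 9,
    [(fkl 2 pr.1 ++ fkl 2 pr.2).getD r 0, (fkl 2 pr.1 ++ fkl 2 pr.2).getD (r + 1) 0,
     (fkl 2 pr.1 ++ fkl 2 pr.2).getD (r + 2) 0, (fkl 2 pr.1 ++ fkl 2 pr.2).getD (r + 3) 0,
     (fkl 2 pr.1 ++ fkl 2 pr.2).getD (r + 4) 0, (fkl 2 pr.1 ++ fkl 2 pr.2).getD (r + 5) 0]
      ∈ sixes := by decide +kernel

theorem wn_six (j : ℕ) : wn j 6 ∈ sixes := by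
  have := sixes_check _ (wo_pair (j / 9)) (j % 9) (Nat.mod_lt _ (by norm_num))
  simp only at this
  have e : ∀ u < 6, (fkl 2 (wo (j / 9)) ++ fkl 2 (wo (j / 9 + 1))).getD (j % 9 + u) 0 =
      wo (j + u) := by
    intro u hu
    rw [fkl_window 2 _ _ (by omega)]
    congr 1
    omega
  have e0 : (fkl 2 (wo (j / 9)) ++ fkl 2 (wo (j / 9 + 1))).getD (j % 9) 0 = wo j :=
    e 0 (by norm_num)
  rw [e0, e 1 (by norm_num), e 2 (by norm_num), e 3 (by norm_num), e 4 (by norm_num),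
    e 5 (by norm_num)] at this
  exact this

theorem Good.win_case {t : Tab} (h : Good t) (i p k : ℕ) (hk : 1 ≤ k)
    (hc : chk (planesW t (wn (i / t.L) 6)) p k (6 * t.L) = true)
    (hi : i % t.L + p + k ≤ 6 * t.L) : ∃ u < k, xv t (i + u) ≠ xv t (i + u + p) := by
  obtain ⟨u, hu, PQ, hPQ, hne⟩ := chk_spec _ _ _ _ _ hc hk hi
  refine ⟨u, hu, fun heq => hne ?_⟩
  simp only [planesW, List.mem_map] at hPQ
  obtain ⟨b, -, rfl⟩ := hPQ
  simp only [h.testBit_Pw b _ (wn_lt _ _)]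
  have hd : t.L * (i / t.L) + i % t.L = i := Nat.div_add_mod _ _
  have e1 := h.Wl_spec 6 (i / t.L) 0 0 0 0 _ _ _ _ (i % t.L + u) rfl rfl rfl rfl (by omega)
  have e2 := h.Wl_spec 6 (i / t.L) 0 0 0 0 _ _ _ _ (i % t.L + u + p) rfl rfl rfl rfl (by omega)
  rw [show t.L * (i / t.L) + (i % t.L + u) = i + u by omega] at e1
  rw [show t.L * (i / t.L) + (i % t.L + u + p) = i + u + p by omega] at e2
  rw [← e1, ← e2] at heq
  rw [act_inj _ _ _ _ _ _ heq]

theorem Good.win_both {t : Tab} (h : Good t) (j : ℕ) :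
    (∀ p, 1 ≤ p → p ≤ 4 * (t.n - 1) →
      chk (planesW t (wn j 6)) p (p / (t.n - 1) + 1) (6 * t.L) = true) ∧
    (∀ q, 1 ≤ q → q ≤ 4 →
      chk (planesW t (wn j 6)) (q * t.L) (q * t.R + 1) (6 * t.L) = true) := by
  have := allL_spec _ _ h.win _ (wn_six j)
  unfold winOK at this
  rcases hb : (allLt (4 * (t.n - 1)) fun p =>
    chk (planesW t (wn j 6)) (p + 1) ((p + 1) / (t.n - 1) + 1) (6 * t.L)) with _ | _
  · rw [hb] at this
    cases this
  · rw [hb, cond_true] at this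
    constructor
    · intro p hp hp'
      have := allLt_spec _ _ hb (p - 1) (by omega)
      simp only [Nat.sub_add_cancel hp] at this
      exact this
    · intro q hq hq'
      have := allLt_spec _ _ this (q - 1) (by omega)
      simp only [Nat.sub_add_cancel hq] at this
      exact this

/-! ### Periods which are not multiples of the block length -/

theorem getD_map_cls (l : List ℕ) (u : ℕ) : (l.map cls).getD u 0 = cls (l.getD u 0) := by
  have := List.getD_map (l := l) (d := 0) (n := u) cls
  exact this

theorem Good.cls_xv {t : Tab} (h : Good t) (i u : ℕ) (hu : u < 5) :
    cls (xv t (i + u)) = (t.S (wo (i / t.L))).getD (i % t.L + u) 0 := by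
  have hL := h.L_large
  have hlen := h.len
  have hd : t.L * (i / t.L) + i % t.L = i := Nat.div_add_mod _ _
  have hm : i % t.L < t.L := Nat.mod_lt _ (by omega)
  rw [Tab.S, getD_map_cls, getD_append _ _ _ (h.T_spec _ (wo_lt _)).1]
  split_ifs with hr
  · rw [show i + u = t.L * (i / t.L) + (i % t.L + u) by omega, h.xv_at _ _ hr, cls_act]
  · have e : i + u = t.L * (i / t.L + 1) + (i % t.L + u - t.L) := by
      rw [Nat.mul_succ]; omega
    have e2 : i % t.L + u - t.L < 4 := by omega
    rw [e, h.xv_at _ _ (by omega), cls_act, Tab.T, getD_append _ _ _ rfl, if_pos (by omega)]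
    congr 1
    rw [List.getD_eq_getElem?_getD, List.getD_eq_getElem?_getD, List.getElem?_take_of_lt e2]

theorem Good.skel_case {t : Tab} (h : Good t) (i p : ℕ) (hp : ¬ t.L ∣ p) :
    ∃ u < 5, xv t (i + u) ≠ xv t (i + u + p) := by
  have hL := h.L_large
  have hm : i % t.L < t.L := Nat.mod_lt _ (by omega)
  have hm' : (i + p) % t.L < t.L := Nat.mod_lt _ (by omega)
  have hne : i % t.L ≠ (i + p) % t.L := by
    intro he
    apply hp
    have h1 : i ≡ i + p [MOD t.L] := he
    have := (Nat.modEq_iff_dvd' (by omega)).1 h1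
    rwa [Nat.add_sub_cancel_left] at this
  have key : ∀ a < 4, ∀ b < 4, ∀ d, 1 ≤ d → d < t.L →
      chk (planes 5 (t.S a) (t.S b)) d 5 (t.L + 4) = true := by
    intro a ha b hb d hd hd'
    have := allLt_spec _ _ h.skel a ha
    have := allLt_spec _ _ this b hb
    have := allLt_spec _ _ this (d - 1) (by omega)
    simp only [Nat.sub_add_cancel hd] at this
    exact this
  rcases Nat.lt_or_gt_of_ne hne with hlt | hlt
  · obtain ⟨u, hu, hh⟩ := chk_planes _ _ _ _ _ _ (i % t.L)
      (key _ (wo_lt (i / t.L)) _ (wo_lt ((i + p) / t.L)) ((i + p) % t.L - i % t.L)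
        (by omega) (by omega)) (by norm_num) (by omega)
    refine ⟨u, hu, fun he => hh ?_⟩
    rw [← h.cls_xv i u hu, he, show i + u + p = i + p + u by omega, h.cls_xv (i + p) u hu]
    congr 1
    omega
  · obtain ⟨u, hu, hh⟩ := chk_planes _ _ _ _ _ _ ((i + p) % t.L)
      (key _ (wo_lt ((i + p) / t.L)) _ (wo_lt (i / t.L)) (i % t.L - (i + p) % t.L)
        (by omega) (by omega)) (by norm_num) (by omega)
    refine ⟨u, hu, fun he => hh ?_⟩
    rw [← h.cls_xv (i + p) u hu, show i + p + u = i + u + p by omega, ← he, h.cls_xv i u hu]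
    congr 1
    omega

/-! ### Long periods which are multiples of the block length -/

theorem gapOK_cons (s y : ℕ) (l : List ℕ) (c : ℕ) : gapOK s (y :: l) c =
    cond (Nat.beq (cls y) s) (gapOK s l 29) (cond (Nat.beq c 1) false (gapOK s l (c - 1))) := rfl

theorem gap_spec (s : ℕ) (l : List ℕ) (c : ℕ) (h : gapOK s l c = true) (hc : 1 ≤ c)
    (hc' : c ≤ 29) : (c ≤ l.length → ∃ m < c, cls (l.getD m 0) = s) ∧
    ∀ u, u + 29 ≤ l.length → ∃ m < 29, cls (l.getD (u + m) 0) = s := by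
  induction l generalizing c with
  | nil =>
    constructor
    · intro h; simp at h; omega
    · intro u h; simp at h
  | cons y l ih =>
    have key : (c ≤ (y :: l).length → ∃ m < c, cls ((y :: l).getD m 0) = s) ∧
        ∃ d, 1 ≤ d ∧ d ≤ 29 ∧ gapOK s l d = true := by
      rw [gapOK_cons] at h
      rcases hb : Nat.beq (cls y) s with _ | _
      · rw [hb, cond_false] at h
        rcases hb1 : Nat.beq c 1 with _ | _
        · rw [hb1, cond_false] at h
          have hc1 : c ≠ 1 := by rintro rfl; simp at hb1
          refine ⟨fun hl => ?_, c - 1, by omega, by omega, h⟩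
          rw [List.length_cons] at hl
          obtain ⟨m, hm, hm'⟩ := (ih (c - 1) h (by omega) (by omega)).1 (by omega)
          exact ⟨m + 1, by omega, by rw [List.getD_cons_succ]; exact hm'⟩
        · rw [hb1, cond_true] at h
          cases h
      · rw [hb, cond_true] at h
        exact ⟨fun _ => ⟨0, by omega, Nat.eq_of_beq_eq_true hb⟩, 29, by norm_num, le_refl _, h⟩
    obtain ⟨k1, d, hd, hd', k2⟩ := key
    refine ⟨k1, fun u hu => ?_⟩
    cases u with
    | zero =>
      obtain ⟨m, hm, hm'⟩ := k1 (by omega)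
      exact ⟨m, by omega, by rw [Nat.zero_add]; exact hm'⟩
    | succ u =>
      rw [List.length_cons] at hu
      obtain ⟨m, hm, hm'⟩ := (ih d k2 hd hd').2 u (by omega)
      exact ⟨m, hm, by rw [show u + 1 + m = u + m + 1 by omega, List.getD_cons_succ]; exact hm'⟩

theorem Good.block_eqv {t : Tab} (h : Good t) (q j b : ℕ) (hb : b + 29 + 16 ≤ t.L)
    (he : ∀ m < 29, xv t (t.L * j + b + m) = xv t (t.L * j + b + m + q * t.L)) : Eqv q j := by
  have hlen := h.len
  have key : ∀ s < 4, ∃ y, cls y = s ∧ act (V 0 j) (V 1 j) (V 2 j) (V 3 j) y =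
      act (V 0 (j + q)) (V 1 (j + q)) (V 2 (j + q)) (V 3 (j + q)) y := by
    intro s hs
    obtain ⟨m, hm, hy⟩ := (gap_spec s t.base 29 (allLt_spec _ _ h.gap s hs) (by norm_num)
      (le_refl _)).2 b (by omega)
    refine ⟨_, hy, ?_⟩
    have := he m hm
    rw [show t.L * j + b + m + q * t.L = t.L * (j + q) + (b + m) by ring, Nat.add_assoc,
      h.xv_at _ _ (by omega), h.xv_at _ _ (by omega), Tab.T, Tab.T, getD_append _ _ _ rfl,
      getD_append _ _ _ rfl, if_pos (by omega), if_pos (by omega)] at this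
    exact this
  obtain ⟨y0, c0, a0⟩ := key 0 (by norm_num)
  obtain ⟨y1, c1, a1⟩ := key 1 (by norm_num)
  obtain ⟨y2, c2, a2⟩ := key 2 (by norm_num)
  obtain ⟨y3, c3, a3⟩ := key 3 (by norm_num)
  have b0 := (act_cls _ _ _ _ _ _ _ _ _ a0).1 c0
  have b1 := (act_cls _ _ _ _ _ _ _ _ _ a1).2.1 c1
  have b2 := (act_cls _ _ _ _ _ _ _ _ _ a2).2.2.1 c2
  have b3 := (act_cls _ _ _ _ _ _ _ _ _ a3).2.2.2 c3
  obtain ⟨d0, d1, d2, d3⟩ := V_cnt j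
  obtain ⟨e0, e1, e2, e3⟩ := V_cnt (j + q)
  rw [d0, e0] at b0
  rw [d1, e1] at b1
  rw [d2, e2] at b2
  rw [d3, e3] at b3
  have f3 : cnt 3 j ≡ cnt 3 (j + q) [MOD 4] := Nat.ModEq.add_left_cancel b2 b0
  have f1 : cnt 1 j ≡ cnt 1 (j + q) [MOD 4] := Nat.ModEq.add_right_cancel f3 b1
  have f2 : cnt 2 j ≡ cnt 2 (j + q) [MOD 4] := Nat.ModEq.add_right_cancel f3 b3
  have f0 : cnt 0 j ≡ cnt 0 (j + q) [MOD 4] :=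
    Nat.ModEq.add_right_cancel f1 (Nat.ModEq.add_right_cancel f2 b2)
  exact ⟨f0, f1, f2, f3⟩

theorem Good.long_case {t : Tab} (h : Good t) (i q : ℕ) (hq : 5 ≤ q) :
    ∃ u < q * t.R + 1, xv t (i + u) ≠ xv t (i + u + q * t.L) := by
  by_contra hcon
  push Not at hcon
  have hL := h.L_large
  have hR : 16 ≤ t.R := by rcases h.val with h | h | h <;> omega
  have hl : 81 ≤ q * t.R + 1 := by nlinarith
  have hs1 : t.L * ((i + 44) / t.L) ≤ i + 44 := Nat.mul_div_le _ _
  have hs2 : i + 44 < t.L * ((i + 44) / t.L + 1) := Nat.lt_mul_div_succ _ (by omega)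
  have ht1 : t.L * ((i + (q * t.R + 1) - 29) / t.L) ≤ i + (q * t.R + 1) - 29 :=
    Nat.mul_div_le _ _
  have ht2 : i + (q * t.R + 1) - 29 < t.L * ((i + (q * t.R + 1) - 29) / t.L + 1) :=
    Nat.lt_mul_div_succ _ (by omega)
  generalize (i + 44) / t.L = s at *
  generalize (i + (q * t.R + 1) - 29) / t.L = e at *
  have hse : s ≤ e := by
    by_contra hc
    have : t.L * (e + 1) ≤ t.L * s := Nat.mul_le_mul_left _ (by omega)
    omega
  have hE : ∀ v < e + 1 - s, Eqv q (s + v) := by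
    intro v hv
    have g1 : t.L * (s + 1) ≤ t.L * (s + v + 1) := Nat.mul_le_mul_left _ (by omega)
    have g2 : t.L * (s + v) ≤ t.L * e := Nat.mul_le_mul_left _ (by omega)
    have g3 : t.L * (s + v + 1) = t.L * (s + v) + t.L := Nat.mul_succ _ _
    apply h.block_eqv q (s + v) (max i (t.L * (s + v)) - t.L * (s + v)) (by omega)
    intro m hm
    have := hcon (max i (t.L * (s + v)) + m - i) (by omega)
    rwa [show i + (max i (t.L * (s + v)) + m - i) =
      t.L * (s + v) + (max i (t.L * (s + v)) - t.L * (s + v)) + m by omega] at this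
  have := (outer q (by omega) s _ hE (by omega)).1
  obtain ⟨N, rfl⟩ : ∃ N, e = s + N := ⟨e - s, by omega⟩
  rcases h.val with ⟨-, v1, v2⟩ | ⟨-, v1, v2⟩ | ⟨-, v1, v2⟩ <;>
    simp only [v1, v2] at hs1 ht2 <;> clear hs2 ht1 hE hcon <;> omega

/-! ### Conclusion -/

theorem Good.main {t : Tab} (h : Good t) (i p : ℕ) (hp : 1 ≤ p) :
    ∃ u < p / (t.n - 1) + 1, xv t (i + u) ≠ xv t (i + u + p) := by
  have hL := h.L_large
  have hm : i % t.L < t.L := Nat.mod_lt _ (by omega)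
  have hn : 29 ≤ t.n - 1 ∧ t.n - 1 ≤ 31 := by rcases h.val with h | h | h <;> omega
  by_cases h4 : p ≤ 4 * (t.n - 1)
  · have : p / (t.n - 1) ≤ 4 := Nat.div_le_of_le_mul (by omega)
    exact h.win_case i p _ (Nat.succ_pos _) ((h.win_both _).1 p hp h4) (by omega)
  · by_cases hd : t.L ∣ p
    · obtain ⟨q, rfl⟩ := hd
      have hq : 1 ≤ q := by
        rcases Nat.eq_zero_or_pos q with rfl | hq
        · simp at hp
        · exact hq
      have hk : t.L * q / (t.n - 1) = q * t.R := by
        have : t.L = (t.n - 1) * t.R := by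
          rcases h.val with ⟨v0, v1, v2⟩ | ⟨v0, v1, v2⟩ | ⟨v0, v1, v2⟩ <;> rw [v0, v1, v2]
        rw [this, Nat.mul_assoc, Nat.mul_div_cancel_left _ (by omega), Nat.mul_comm]
      rw [hk, Nat.mul_comm t.L q]
      by_cases hq4 : q ≤ 4
      · refine h.win_case i _ _ (by omega) ((h.win_both _).2 q hq hq4) ?_
        have h1 : q * t.L ≤ 4 * t.L := Nat.mul_le_mul_right _ hq4
        have h2 : q * t.R ≤ 4 * t.R := Nat.mul_le_mul_right _ hq4
        have hR : t.R ≤ 17 := by rcases h.val with h | h | h <;> omega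
        omega
      · exact h.long_case i q (by omega)
    · obtain ⟨u, hu, hne⟩ := h.skel_case i p hd
      have : 4 ≤ p / (t.n - 1) := (Nat.le_div_iff_mul_le (by omega)).2 (by omega)
      exact ⟨u, by omega, hne⟩

theorem Good.final {t : Tab} (h : Good t) :
    ∃ x : ℕ → Fin t.n, ∀ (v : List (Fin t.n)) (q : ℕ),
      FactorOf v x → HasPeriod v q → (v.length : ℚ) ≤ (t.n : ℚ) * q / ((t.n : ℚ) - 1) := by
  refine ⟨fun i => ⟨xv t i, h.xv_lt i⟩, ?_⟩
  rintro v q ⟨i, hi⟩ ⟨hq, hper⟩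
  have hn : 30 ≤ t.n := by rcases h.val with h | h | h <;> omega
  by_contra hlt
  push Not at hlt
  have hnq : (30 : ℚ) ≤ t.n := by exact_mod_cast hn
  rw [div_lt_iff₀ (by linarith)] at hlt
  have hlt' : t.n * q + v.length < v.length * t.n := by
    have : (t.n : ℚ) * q + v.length < v.length * t.n := by linarith
    exact_mod_cast this
  obtain ⟨m, hm⟩ : ∃ m, t.n = m + 1 := ⟨t.n - 1, by omega⟩
  obtain ⟨u, hu, hne⟩ := h.main i q hq
  have hlen : u + q < v.length := by
    clear hper hi hlt
    generalize v.length = l at hlt' ⊢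
    rw [hm] at hlt' hu
    rw [Nat.add_sub_cancel] at hu
    have h1 : q / m * m ≤ q := Nat.div_mul_le_self _ _
    have h2 : (u + q) * m ≤ (q / m + q) * m := Nat.mul_le_mul_right _ (by omega)
    by_contra hc
    have h3 : l * m ≤ (u + q) * m := Nat.mul_le_mul_right _ (by omega)
    nlinarith
  have := hper u hlen
  have get : ∀ k < v.length, v[k]? = some ⟨xv t (i + k), h.xv_lt (i + k)⟩ := by
    intro k hk
    unfold OccursAt at hi
    rw [hi, List.getElem?_map, List.getElem?_range hk]
    rfl
  rw [get u (by omega), get (u + q) hlen] at this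
  apply hne
  have := congrArg Fin.val (Option.some.inj this)
  rw [← Nat.add_assoc] at this
  exact this

theorem good30 : Good tab30 :=
  ⟨win30, skel30, gap30, letters30, by decide +kernel, Or.inl ⟨rfl, rfl, rfl⟩⟩

theorem good31 : Good tab31 :=
  ⟨win31, skel31, gap31, letters31, by decide +kernel, Or.inr (Or.inl ⟨rfl, rfl, rfl⟩)⟩

theorem good32 : Good tab32 :=
  ⟨win32, skel32, gap32, letters32, by decide +kernel, Or.inr (Or.inr ⟨rfl, rfl, rfl⟩)⟩

end Dej

/-- Dejean's conjecture for `n ∈ {30, 31, 32}`: there is an infinite word `x` over `n` letters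
such that every factor of `x` having period `q` has length at most `n·q/(n-1)`, i.e. `x`
contains no factor of exponent strictly greater than `n/(n-1)`. -/
theorem stmt3 (n : ℕ) (hn : n = 30 ∨ n = 31 ∨ n = 32) :
    ∃ x : ℕ → Fin n, ∀ (v : List (Fin n)) (q : ℕ),
      FactorOf v x → HasPeriod v q → (v.length : ℚ) ≤ (n : ℚ) * q / ((n : ℚ) - 1) := by
  rcases hn with rfl | rfl | rfl
  · exact Dej.good30.final
  · exact Dej.good31.final
  · exact Dej.good32.final
end
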